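/- arXiv:0912.0832 — 2 statements merged into one kernel-verified Lean document; each statement's English description precedes it below -/
import Mathlib

section
/- Let O₁ and O₂ be open connected subsets of ℝ³ and let Φ : O₁ → O₂ be a C¹ diffeomorphism with the property that for every open set D ⊆ ℝ² and every C¹ function u : D → ℝ satisfying ∂u/∂t + u·∂u/∂x = 0 whose graph {(t,x,u(t,x)) : (t,x) ∈ D} is contained in O₁, there exist an open set D′ ⊆ ℝ² and a C¹ function ũ : D′ → ℝ satisfying ∂ũ/∂t + ũ·∂ũ/∂x = 0 such that Φ({(t,x,u(t,x)) : (t,x) ∈ D}) = {(t,x,ũ(t,x)) : (t,x) ∈ D′}. Then there exists an invertible real 3×3 matrix (sⱼⁱ) (upper index = row, lower index = column) such that for all (t,x,v) ∈ O₁: Φ(t,x,v) = ( (s₁¹t+s₂¹x+s₃¹)/(s₁³t+s₂³x+s₃³), (s₁²t+s₂²x+s₃²)/(s₁³t+s₂³x+s₃³), ((−Δ₃¹t+Δ₁¹)v+(Δ₃¹x+Δ₂¹)) / ((−Δ₃²t+Δ₁²)v+(Δ₃²x+Δ₂²)) ), where Δⱼⁱ is the 2×2 minor determinant obtained by deleting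 the i-th row and the j-th column of (sⱼⁱ). -/
/-- The determinant of the 2×2 matrix obtained from a 3×3 matrix `s` by deleting
row `i` and column `j`. -/
noncomputable def minor3 (s : Matrix (Fin 3) (Fin 3) ℝ) (i j : Fin 3) : ℝ :=
  (s.submatrix i.succAbove j.succAbove).det

/-- The graph `{(t, x, u (t, x)) : (t, x) ∈ D}` of a function `u` over `D ⊆ ℝ²`. -/
def burgersGraph (D : Set (ℝ × ℝ)) (u : ℝ × ℝ → ℝ) : Set (ℝ × ℝ × ℝ) :=
  (fun p : ℝ × ℝ => (p.1, p.2, u p)) '' D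

/-- `u` is a `C¹` solution of `∂u/∂t + u ∂u/∂x = 0` on the open set `D`. -/
def IsBurgersSolution (D : Set (ℝ × ℝ)) (u : ℝ × ℝ → ℝ) : Prop :=
  IsOpen D ∧ ContDiffOn ℝ 1 u D ∧
    ∀ p ∈ D, deriv (fun t => u (t, p.2)) p.1 + u p * deriv (fun x => u (p.1, x)) p.2 = 0

/-! Two points of different fibres of `(t, x, v) ↦ (t, x)` lie on the graph of a single,
disconnected solution, so `Φ` cannot send them to one fibre: fibres of the target pull back into
fibres. The tangent planes at a point to the graphs of solutions share only the characteristic line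
spanned by `(1, v, 0)`, so the derivative of `Φ` preserves characteristic lines as well. Hence `Φ`
locally induces a map of the `(t, x)`-plane, independent of `v` and with invertible derivatives,
taking every segment with slope in some open interval into a line.

Such a map is projective near a point: it maps the lines through two points `p` and `q` to lines,
and a map that matches two pencils of lines in this way is determined by its derivatives at the
two vertices. The matrix is unique up to a scalar, so the local ones agree on a connected domain.
Differentiating the projective map along a characteristic gives the last component: the minors are
the coefficients of the dual action on lines.
-/

open Filter Set Topology
open scoped Matrix

section ProjectiveTransformations

variable {K : Type*} [Field K]

/-- The homogeneous coordinates of a point of the affine plane, on which `3 × 3` matrices act. -/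
def homog (r : K × K) : Fin 3 → K := ![r.1, r.2, 1]

/-- `R` is the image of `r` under the projective transformation with matrix `s`. Asking for a
nonzero factor keeps the image in the affine plane. -/
def IsProjectiveImage (s : Matrix (Fin 3) (Fin 3) K) (r R : K × K) : Prop :=
  ∃ ρ : K, ρ ≠ 0 ∧ s *ᵥ homog r = ρ • homog R

lemma isProjectiveImage_iff {s : Matrix (Fin 3) (Fin 3) K} {r R : K × K} :
    IsProjectiveImage s r R ↔ s 2 0 * r.1 + s 2 1 * r.2 + s 2 2 ≠ 0 ∧
      R = ((s 0 0 * r.1 + s 0 1 * r.2 + s 0 2) / (s 2 0 * r.1 + s 2 1 * r.2 + s 2 2),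
        (s 1 0 * r.1 + s 1 1 * r.2 + s 1 2) / (s 2 0 * r.1 + s 2 1 * r.2 + s 2 2)) := by
  have happly : ∀ i, (s *ᵥ homog r) i = s i 0 * r.1 + s i 1 * r.2 + s i 2 := fun i => by
    simp [Matrix.mulVec, dotProduct, homog, Fin.sum_univ_three]
  simp only [← happly]
  constructor
  · rintro ⟨ρ, hρ, h⟩
    have hcoord : ∀ i, (s *ᵥ homog r) i = ρ * homog R i := congrFun h
    rw [hcoord 0, hcoord 1, hcoord 2]
    simp [homog, hρ]
  · rintro ⟨hρ, rfl⟩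
    refine ⟨_, hρ, funext fun i => ?_⟩
    fin_cases i
    exacts [(mul_div_cancel₀ _ hρ).symm, (mul_div_cancel₀ _ hρ).symm, (mul_one _).symm]

lemma IsProjectiveImage.smul {s : Matrix (Fin 3) (Fin 3) K} {r R : K × K} {c : K}
    (h : IsProjectiveImage s r R) (hc : c ≠ 0) : IsProjectiveImage (c • s) r R := by
  obtain ⟨ρ, hρ, h⟩ := h
  exact ⟨c * ρ, mul_ne_zero hc hρ, by rw [Matrix.smul_mulVec, h, smul_smul]⟩

lemma IsProjectiveImage.exists_mulVec_eq_smul {s s' : Matrix (Fin 3) (Fin 3) K} {r R : K × K}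
    (h : IsProjectiveImage s r R) (h' : IsProjectiveImage s' r R) :
    ∃ c : K, c ≠ 0 ∧ s' *ᵥ homog r = c • s *ᵥ homog r := by
  obtain ⟨ρ, hρ, h⟩ := h
  obtain ⟨ρ', hρ', h'⟩ := h'
  exact ⟨ρ' / ρ, div_ne_zero hρ' hρ, by rw [h, h', smul_smul, div_mul_cancel₀ _ hρ]⟩

/-- The standard area form of the plane, which eliminates unknowns from vector equations. -/
def areaForm (y z : K × K) : K := y.1 * z.2 - y.2 * z.1

lemma apply_eq_fst_smul_add_snd_smul {M : Type*} [AddCommGroup M] [Module K M]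
    (L : K × K →ₗ[K] M) (y : K × K) : L y = y.1 • L (1, 0) + y.2 • L (0, 1) := by
  rw [← map_smul, ← map_smul, ← map_add]
  simp

lemma areaForm_map (L : K × K →ₗ[K] K × K) (y z : K × K) :
    areaForm (L y) (L z) = LinearMap.det L * areaForm y z := by
  have hdet : LinearMap.det L = areaForm (L (1, 0)) (L (0, 1)) := by
    rw [← LinearMap.det_toMatrix (Module.Basis.finTwoProd K), Matrix.det_fin_two]
    simp [areaForm, LinearMap.toMatrix_apply, mul_comm]
  rw [hdet, apply_eq_fst_smul_add_snd_smul L y, apply_eq_fst_smul_add_snd_smul L z]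
  simp only [areaForm, Prod.fst_add, Prod.snd_add, Prod.smul_fst, Prod.smul_snd, smul_eq_mul]
  ring

lemma areaForm_smul_left (c : K) (y z : K × K) : areaForm (c • y) z = c * areaForm y z := by
  simp only [areaForm, Prod.smul_fst, Prod.smul_snd, smul_eq_mul]; ring

lemma exists_isProjectiveImage_of_fractional {A : K × K →ₗ[K] K × K} (ℓ : K × K →ₗ[K] K) {e : K}
    (p P : K × K) (hA : LinearMap.det A ≠ 0) (he : e ≠ 0) :
    ∃ s : Matrix (Fin 3) (Fin 3) K, IsUnit s.det ∧ ∀ r R : K × K, ℓ (r - p) + e ≠ 0 →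
      (ℓ (r - p) + e) • (R - P) = A (r - p) → IsProjectiveImage s r R := by
  let translation (a : K × K) : Matrix (Fin 3) (Fin 3) K := !![1, 0, a.1; 0, 1, a.2; 0, 0, 1]
  let core : Matrix (Fin 3) (Fin 3) K :=
    !![(A (1, 0)).1, (A (0, 1)).1, 0; (A (1, 0)).2, (A (0, 1)).2, 0; ℓ (1, 0), ℓ (0, 1), e]
  have hdet_translation (a : K × K) : (translation a).det = 1 := by
    simp [translation, Matrix.det_fin_three]
  have hdet_core : core.det = LinearMap.det A * e := by
    have := areaForm_map A (1, 0) (0, 1)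
    simp only [areaForm] at this
    simp only [core, Matrix.det_fin_three, Matrix.of_apply, Matrix.cons_val]
    linear_combination e * this
  refine ⟨translation P * core * translation (-p), ?_, fun r R hne hR => ⟨_, hne, ?_⟩⟩
  · simpa [Matrix.det_mul, hdet_translation, hdet_core] using ⟨hA, he⟩
  have htranslation (a r : K × K) : translation a *ᵥ homog r = homog (r + a) := by
    ext i
    fin_cases i <;> simp [translation, homog, Matrix.mulVec, dotProduct, Fin.sum_univ_three]
  have hcore (y : K × K) : core *ᵥ homog y = ![(A y).1, (A y).2, ℓ y + e] := by
    rw [apply_eq_fst_smul_add_snd_smul A, apply_eq_fst_smul_add_snd_smul ℓ]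
    ext i
    fin_cases i <;>
      simp [core, homog, Matrix.mulVec, dotProduct, Fin.sum_univ_three, mul_comm]
  have himage : core *ᵥ homog (r - p) = (ℓ (r - p) + e) • homog (R - P) := by
    rw [hcore, ← hR]
    ext i
    fin_cases i <;> simp [homog]
  rw [← Matrix.mulVec_mulVec, htranslation, ← sub_eq_add_neg, ← Matrix.mulVec_mulVec, himage,
    Matrix.mulVec_smul, htranslation, sub_add_cancel]

lemma mul_det_eq_of_pencils {L L' : K × K →ₗ[K] K × K} {u w y : K × K} {κ κ' a b : K}
    (h : w = κ • L u) (h' : w = κ' • L' u) (hab : w = a • L y - b • L' (y - u))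
    (hy : areaForm u y ≠ 0) : a * (κ * LinearMap.det L) = b * (κ' * LinearMap.det L') := by
  have hpair : a * areaForm w (L y) = b * areaForm w (L' (y - u)) := by
    have hfst := congrArg Prod.fst hab
    have hsnd := congrArg Prod.snd hab
    simp only [Prod.fst_sub, Prod.snd_sub, Prod.smul_fst, Prod.smul_snd, smul_eq_mul] at hfst hsnd
    simp only [areaForm]
    linear_combination w.2 * hfst - w.1 * hsnd
  have hpencil : areaForm u (y - u) = areaForm u y := by
    simp only [areaForm, Prod.fst_sub, Prod.snd_sub]; ring
  have hL : areaForm w (L y) = κ * LinearMap.det L * areaForm u y := by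
    rw [h, areaForm_smul_left, areaForm_map, mul_assoc]
  have hL' : areaForm w (L' (y - u)) = κ' * LinearMap.det L' * areaForm u y := by
    rw [h', areaForm_smul_left, areaForm_map, hpencil, mul_assoc]
  rw [hL, hL', ← mul_assoc, ← mul_assoc b] at hpair
  exact mul_right_cancel₀ hy hpair

-- If `R - P = a • L (r - p)` and `R - Q = b • L' (r - q)`, the area forms of `Q - P` with the two
-- directions give `a : b`; applying a functional `f` to `(R - P) - (R - Q) = Q - P` then gives `a`
-- as a constant over an affine function of `r`.
lemma exists_isProjectiveImage_of_pencils {p q P Q : K × K} {L L' : K × K →ₗ[K] K × K} {κ κ' : K}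
    (hL : LinearMap.det L ≠ 0) (hL' : LinearMap.det L' ≠ 0) (hPQ : P ≠ Q)
    (h : Q - P = κ • L (q - p)) (h' : Q - P = κ' • L' (q - p)) :
    ∃ s : Matrix (Fin 3) (Fin 3) K, IsUnit s.det ∧ ∀ r R : K × K, areaForm (q - p) (r - p) ≠ 0 →
      (∃ a : K, R - P = a • L (r - p)) → (∃ b : K, R - Q = b • L' (r - q)) →
        IsProjectiveImage s r R := by
  have hw : Q - P ≠ 0 := sub_ne_zero.mpr hPQ.symm
  have hκ : κ ≠ 0 := by rintro rfl; exact hw (by rw [h, zero_smul])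
  have hκ' : κ' ≠ 0 := by rintro rfl; exact hw (by rw [h', zero_smul])
  obtain ⟨f, hf⟩ : ∃ f : Module.Dual K (K × K), f (Q - P) ≠ 0 := by
    by_contra! hzero
    exact hw ((Module.forall_dual_apply_eq_zero_iff K _).mp hzero)
  set x := κ * LinearMap.det L
  set y := κ' * LinearMap.det L'
  have hx : x ≠ 0 := mul_ne_zero hκ hL
  have hy : y ≠ 0 := mul_ne_zero hκ' hL'
  have hfL' : f (L' (q - p)) ≠ 0 := fun hzero => hf (by rw [h', map_smul, hzero, smul_zero])
  obtain ⟨s, hs, himage⟩ := exists_isProjectiveImage_of_fractional (A := (y * f (Q - P)) • L)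
    (f ∘ₗ (y • L - x • L')) (e := x * f (L' (q - p))) p P
    (by rw [LinearMap.det_smul]; exact mul_ne_zero (pow_ne_zero _ (mul_ne_zero hy hf)) hL)
    (mul_ne_zero hx hfL')
  refine ⟨s, hs, fun r R hr ⟨a, ha⟩ ⟨b, hb⟩ => ?_⟩
  have hab : Q - P = a • L (r - p) - b • L' (r - p - (q - p)) := by
    rw [sub_sub_sub_cancel_right, ← ha, ← hb, sub_sub_sub_cancel_left]
  have hratio : a * x = b * y := mul_det_eq_of_pencils h h' hab hr
  have hfactor : a * (f (y • L (r - p) - x • L' (r - p)) + x * f (L' (q - p))) =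
      y * f (Q - P) := by
    have hf_ab := congrArg f hab
    simp only [map_sub, map_smul, smul_eq_mul] at hf_ab ⊢
    linear_combination -y * hf_ab +
      (f (L' q) - f (L' p) - (f (L' r) - f (L' p))) * hratio
  refine himage r R (right_ne_zero_of_mul (hfactor ▸ mul_ne_zero hy hf)) ?_
  rw [ha, smul_smul, LinearMap.smul_apply, ← hfactor, mul_comm a]
  rfl

lemma eq_smul_of_frame {n : Type*} [Fintype n] [DecidableEq n] {s s' b : Matrix n n K} {μ : n → K}
    {ν : K} (hs : IsUnit s.det) (hb : IsUnit b.det) (hcol : s' * b = s * b * Matrix.diagonal μ)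
    (hsum : s' *ᵥ (b *ᵥ 1) = ν • s *ᵥ (b *ᵥ 1)) : s' = ν • s := by
  have hinj : Function.Injective (s * b).mulVec :=
    Matrix.mulVec_injective_of_isUnit
      ((Matrix.isUnit_iff_isUnit_det _).mpr (by rw [Matrix.det_mul]; exact hs.mul hb))
  have hμ : Matrix.diagonal μ = ν • (1 : Matrix n n K) := by
    have hdiag : Matrix.diagonal μ *ᵥ (1 : n → K) = ν • 1 := hinj <| by
      simp only [Matrix.mulVec_mulVec, Matrix.mulVec_smul] at hsum ⊢
      rw [← hcol, hsum]
    rw [Matrix.smul_one_eq_diagonal]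
    congr 1
    ext i
    simpa [Matrix.mulVec_diagonal] using congrFun hdiag i
  rw [hμ, Matrix.mul_smul, Matrix.mul_one, ← Matrix.smul_mul] at hcol
  exact ((Matrix.isUnit_iff_isUnit_det b).mpr hb).mul_right_cancel hcol

end ProjectiveTransformations

section RealProjectiveTransformations

lemma exists_eq_smul_of_eventually_isProjectiveImage {s s' : Matrix (Fin 3) (Fin 3) ℝ} {r₀ : ℝ × ℝ}
    (hs : IsUnit s.det)
    (h : ∀ᶠ r in 𝓝 r₀, ∃ R, IsProjectiveImage s r R ∧ IsProjectiveImage s' r R) :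
    ∃ c : ℝ, c ≠ 0 ∧ s' = c • s := by
  have hfactor : ∀ᶠ r in 𝓝 r₀, ∃ c : ℝ, c ≠ 0 ∧ s' *ᵥ homog r = c • s *ᵥ homog r :=
    h.mono fun r ⟨_, hr, hr'⟩ => hr.exists_mulVec_eq_smul hr'
  have hline (y : ℝ × ℝ) : Tendsto (fun δ : ℝ => r₀ + δ • y) (𝓝[≠] 0) (𝓝 r₀) := by
    have : Continuous fun δ : ℝ => r₀ + δ • y := by fun_prop
    simpa using this.continuousAt.tendsto.mono_left (nhdsWithin_le_nhds (a := 0))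
  obtain ⟨δ, hδ₁, hδ₂, hδ₁₂, hδ⟩ := ((hline (1, 0)).eventually hfactor |>.and <|
    ((hline (0, 1)).eventually hfactor).and <|
    ((hline (1, 1)).eventually hfactor).and self_mem_nhdsWithin).exists
  obtain ⟨μ₀, -, h₀⟩ := hfactor.self_of_nhds
  obtain ⟨μ₁, -, h₁⟩ := hδ₁
  obtain ⟨μ₂, -, h₂⟩ := hδ₂
  obtain ⟨ν, hν, h₁₂⟩ := hδ₁₂
  let b : Matrix (Fin 3) (Fin 3) ℝ :=
    (Matrix.of ![homog (r₀ + δ • (1, 0)), homog (r₀ + δ • (0, 1)), -homog r₀])ᵀ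
  have hb : IsUnit b.det := by
    have hdet : b.det = -δ ^ 2 := by
      simp only [b, homog, Matrix.det_transpose, Matrix.det_fin_three, Matrix.of_apply,
        Matrix.cons_val, Matrix.neg_cons, Prod.fst_add, Prod.snd_add, Prod.smul_mk, smul_eq_mul]
      ring
    rw [hdet]
    exact (neg_ne_zero.mpr (pow_ne_zero 2 hδ)).isUnit
  have hsum : b *ᵥ 1 = homog (r₀ + δ • (1, 1)) := by
    ext i
    fin_cases i <;> simp [b, homog, Matrix.mulVec, dotProduct, Fin.sum_univ_three]
  refine ⟨ν, hν, eq_smul_of_frame (μ := ![μ₁, μ₂, μ₀]) hs hb ?_ (by rw [hsum, h₁₂])⟩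
  ext i j
  rw [Matrix.mul_diagonal]
  fin_cases j
  · exact (congrFun h₁ i).trans (mul_comm _ _)
  · exact (congrFun h₂ i).trans (mul_comm _ _)
  · have hneg : s' *ᵥ (-homog r₀) = μ₀ • s *ᵥ (-homog r₀) := by
      rw [Matrix.mulVec_neg, Matrix.mulVec_neg, h₀, smul_neg]
    exact (congrFun hneg i).trans (mul_comm _ _)

lemma exists_isProjectiveImage_of_locally {α : Type*} [TopologicalSpace α] {O : Set α}
    {π f : α → ℝ × ℝ} (hO : IsConnected O) (hπ : IsOpenMap π)
    (h : ∀ p ∈ O, ∃ s : Matrix (Fin 3) (Fin 3) ℝ, IsUnit s.det ∧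
      ∀ᶠ q in 𝓝 p, IsProjectiveImage s (π q) (f q)) :
    ∃ s : Matrix (Fin 3) (Fin 3) ℝ, IsUnit s.det ∧
      ∀ p ∈ O, ∀ᶠ q in 𝓝 p, IsProjectiveImage s (π q) (f q) := by
  obtain ⟨p₀, hp₀⟩ := hO.nonempty
  obtain ⟨s, hs, hsp₀⟩ := h p₀ hp₀
  refine ⟨s, hs, hO.isPreconnected.subset_of_closure_inter_subset isOpen_setOfPred_eventually_nhds
    ⟨p₀, hp₀, hsp₀⟩ ?_⟩
  rintro p ⟨hpcl, hpO⟩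
  obtain ⟨s', hs', hsp'⟩ := h p hpO
  obtain ⟨p', hp's, hp's'⟩ := ((mem_closure_iff_frequently.mp hpcl).and_eventually
    hsp'.eventually_nhds).exists
  have hboth : ∀ᶠ r in 𝓝 (π p'), ∃ R, IsProjectiveImage s' r R ∧ IsProjectiveImage s r R := by
    filter_upwards [hπ.image_mem_nhds (hp's'.and hp's)]
    rintro _ ⟨q, hq, rfl⟩
    exact ⟨f q, hq⟩
  obtain ⟨c, hc, rfl⟩ := exists_eq_smul_of_eventually_isProjectiveImage hs' hboth
  exact hsp'.mono fun q hq => hq.smul hc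

end RealProjectiveTransformations

section BurgersSolutions

variable {D D₁ D₂ : Set (ℝ × ℝ)} {u u₁ u₂ : ℝ × ℝ → ℝ}

/-- The projection `(t, x, v) ↦ (t, x)` of the space of graphs onto the plane of independent
variables. -/
def baseProj : ℝ × ℝ × ℝ →L[ℝ] ℝ × ℝ :=
  (ContinuousLinearMap.fst ℝ ℝ (ℝ × ℝ)).prod
    ((ContinuousLinearMap.fst ℝ ℝ ℝ).comp (ContinuousLinearMap.snd ℝ ℝ (ℝ × ℝ)))

@[simp]
lemma baseProj_apply (p : ℝ × ℝ × ℝ) : baseProj p = (p.1, p.2.1) := rfl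

lemma isOpenMap_baseProj : IsOpenMap baseProj :=
  baseProj.isOpenMap fun r => ⟨(r.1, r.2, 0), rfl⟩

lemma mem_burgersGraph {q : ℝ × ℝ × ℝ} :
    q ∈ burgersGraph D u ↔ baseProj q ∈ D ∧ q.2.2 = u (baseProj q) := by
  constructor
  · rintro ⟨r, hr, rfl⟩
    exact ⟨hr, rfl⟩
  · rintro ⟨hq, hu⟩
    exact ⟨baseProj q, hq, Prod.ext rfl (Prod.ext rfl hu.symm)⟩

lemma injOn_baseProj_burgersGraph : InjOn baseProj (burgersGraph D u) := by
  rintro _ ⟨r, -, rfl⟩ _ ⟨r', -, rfl⟩ h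
  exact congrArg (fun r : ℝ × ℝ => (r.1, r.2, u r)) h

lemma deriv_fst_eq_fderiv {r : ℝ × ℝ} (hu : DifferentiableAt ℝ u r) :
    deriv (fun t => u (t, r.2)) r.1 = fderiv ℝ u r (1, 0) :=
  (HasFDerivAt.comp_hasDerivAt (l := u) r.1 hu.hasFDerivAt
    ((hasDerivAt_id r.1).prodMk (hasDerivAt_const r.1 r.2))).deriv

lemma deriv_snd_eq_fderiv {r : ℝ × ℝ} (hu : DifferentiableAt ℝ u r) :
    deriv (fun x => u (r.1, x)) r.2 = fderiv ℝ u r (0, 1) :=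
  (HasFDerivAt.comp_hasDerivAt (l := u) r.2 hu.hasFDerivAt
    ((hasDerivAt_const r.2 r.1).prodMk (hasDerivAt_id r.2))).deriv

lemma isBurgersSolution_iff_fderiv :
    IsBurgersSolution D u ↔
      IsOpen D ∧ ContDiffOn ℝ 1 u D ∧ ∀ r ∈ D, fderiv ℝ u r (1, u r) = 0 := by
  refine and_congr_right fun hD => and_congr_right fun hu => forall₂_congr fun r hr => ?_
  have hdiff : DifferentiableAt ℝ u r :=
    (hu.contDiffAt (hD.mem_nhds hr)).differentiableAt one_ne_zero
  have hsplit : ((1, u r) : ℝ × ℝ) = (1, 0) + u r • (0, 1) := by simp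
  rw [deriv_fst_eq_fderiv hdiff, deriv_snd_eq_fderiv hdiff, hsplit, map_add, map_smul, smul_eq_mul]

namespace IsBurgersSolution

lemma differentiableAt (hu : IsBurgersSolution D u) {r : ℝ × ℝ} (hr : r ∈ D) :
    DifferentiableAt ℝ u r :=
  (hu.2.1.contDiffAt (hu.1.mem_nhds hr)).differentiableAt one_ne_zero

lemma fderiv_apply (hu : IsBurgersSolution D u) {r : ℝ × ℝ} (hr : r ∈ D) (y : ℝ × ℝ) :
    fderiv ℝ u r y = fderiv ℝ u r (0, 1) * (y.2 - u r * y.1) := by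
  have hsplit : y = y.1 • (1, u r) + (y.2 - u r * y.1) • (0, 1) := by
    ext <;> simp only [Prod.fst_add, Prod.snd_add, Prod.smul_mk, smul_eq_mul] <;> ring
  conv_lhs => rw [hsplit, map_add, map_smul, map_smul,
    (isBurgersSolution_iff_fderiv.mp hu).2.2 r hr, smul_zero, zero_add, smul_eq_mul, mul_comm]

lemma congr (hu : IsBurgersSolution D u₁) (h : EqOn u₂ u₁ D) : IsBurgersSolution D u₂ := by
  rw [isBurgersSolution_iff_fderiv] at hu ⊢
  refine ⟨hu.1, hu.2.1.congr h, fun r hr => ?_⟩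
  rw [(h.eventuallyEq_of_mem (hu.1.mem_nhds hr)).fderiv_eq, h hr]
  exact hu.2.2 r hr

lemma union (h₁ : IsBurgersSolution D₁ u) (h₂ : IsBurgersSolution D₂ u) :
    IsBurgersSolution (D₁ ∪ D₂) u :=
  ⟨h₁.1.union h₂.1, h₁.2.1.union_of_isOpen h₂.2.1 h₁.1 h₂.1,
    fun r hr => hr.elim (h₁.2.2 r) (h₂.2.2 r)⟩

lemma exists_union (h₁ : IsBurgersSolution D₁ u₁) (h₂ : IsBurgersSolution D₂ u₂)
    (hD : Disjoint D₁ D₂) :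
    ∃ u, IsBurgersSolution (D₁ ∪ D₂) u ∧
      burgersGraph (D₁ ∪ D₂) u = burgersGraph D₁ u₁ ∪ burgersGraph D₂ u₂ := by
  classical
  have heq₁ : EqOn (D₁.piecewise u₁ u₂) u₁ D₁ := D₁.piecewise_eqOn u₁ u₂
  have heq₂ : EqOn (D₁.piecewise u₁ u₂) u₂ D₂ :=
    (D₁.piecewise_eqOn_compl u₁ u₂).mono hD.subset_compl_left
  refine ⟨D₁.piecewise u₁ u₂, (h₁.congr heq₁).union (h₂.congr heq₂), ?_⟩
  rw [burgersGraph, image_union]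
  congr 1
  · exact image_congr fun r hr => by rw [heq₁ hr]
  · exact image_congr fun r hr => by rw [heq₂ hr]

end IsBurgersSolution

-- For `c ≠ 0` the solution is `(x - x₁) / (t - t₁)` with `t₁ = t₀ - 1 / c` and `x₁ = x₀ - v / c`:
-- its characteristics are the lines through `(t₁, x₁)`.
lemma exists_isBurgersSolution {O : Set (ℝ × ℝ × ℝ)} (hO : IsOpen O) {p : ℝ × ℝ × ℝ} (hp : p ∈ O)
    (c : ℝ) :
    ∃ D u, IsBurgersSolution D u ∧ burgersGraph D u ⊆ O ∧ p ∈ burgersGraph D u ∧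
      fderiv ℝ u (baseProj p) (0, 1) = c := by
  obtain ⟨t₀, x₀, v⟩ := p
  let u : ℝ × ℝ → ℝ := fun r => (v + c * (r.2 - x₀)) / (1 + c * (r.1 - t₀))
  let E : Set (ℝ × ℝ) := {r | 0 < 1 + c * (r.1 - t₀)}
  have hE : IsOpen E := isOpen_lt (by fun_prop) (by fun_prop)
  have hu : ContDiffOn ℝ 1 u E :=
    ContDiffOn.div (by fun_prop) (by fun_prop) fun r hr => ne_of_gt hr
  have hgraph : ContinuousOn (fun r : ℝ × ℝ => (r.1, r.2, u r)) E := by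
    have := hu.continuousOn
    fun_prop
  have hx : ∀ r : ℝ × ℝ, HasDerivAt (fun x => u (r.1, x)) (c / (1 + c * (r.1 - t₀))) r.2 :=
    fun r => by
      simpa using ((((hasDerivAt_id r.2).sub_const x₀).const_mul c).const_add v).div_const
        (1 + c * (r.1 - t₀))
  have ht : ∀ r ∈ E, HasDerivAt (fun t => u (t, r.2)) (-(u r * (c / (1 + c * (r.1 - t₀))))) r.1 :=
    fun r hr => by
      have hden := (((hasDerivAt_id r.1).sub_const t₀).const_mul c).const_add 1
      have hne : 1 + c * (r.1 - t₀) ≠ 0 := ne_of_gt hr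
      refine ((hasDerivAt_const r.1 (v + c * (r.2 - x₀))).div hden hne).congr_deriv ?_
      simp only [u, id]
      field_simp
      ring
  have hbase : (t₀, x₀) ∈ E := by simp [E]
  refine ⟨E ∩ (fun r => (r.1, r.2, u r)) ⁻¹' O, u,
    ⟨hgraph.isOpen_inter_preimage hE hO, hu.mono inter_subset_left, fun r hr => ?_⟩, ?_,
    ⟨(t₀, x₀), ⟨hbase, by simpa [u] using hp⟩, by simp [u]⟩, ?_⟩
  · rw [(ht r hr.1).deriv, (hx r).deriv, neg_add_cancel]
  · rintro _ ⟨r, hr, rfl⟩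
    exact hr.2
  · have hdiff := (hu.contDiffAt (hE.mem_nhds hbase)).differentiableAt one_ne_zero
    rw [baseProj_apply, ← deriv_snd_eq_fderiv hdiff, (hx (t₀, x₀)).deriv]
    simp

end BurgersSolutions

section GraphPreservingMaps

variable {O : Set (ℝ × ℝ × ℝ)} {Φ : ℝ × ℝ × ℝ → ℝ × ℝ × ℝ}

/-- `Φ` maps the graph of every solution of the Burgers equation lying in `O` onto the graph of
a solution. -/
def PreservesBurgersGraphs (O : Set (ℝ × ℝ × ℝ)) (Φ : ℝ × ℝ × ℝ → ℝ × ℝ × ℝ) : Prop :=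
  ∀ D u, IsBurgersSolution D u → burgersGraph D u ⊆ O →
    ∃ D' u', IsBurgersSolution D' u' ∧ Φ '' burgersGraph D u = burgersGraph D' u'

lemma PreservesBurgersGraphs.baseProj_eq (hΦ : PreservesBurgersGraphs O Φ) (hO : IsOpen O)
    (hinj : InjOn Φ O) {p q : ℝ × ℝ × ℝ} (hp : p ∈ O) (hq : q ∈ O)
    (h : baseProj (Φ p) = baseProj (Φ q)) : baseProj p = baseProj q := by
  by_contra hpq
  obtain ⟨U, W, hU, hW, hpU, hqW, hUW⟩ := t2_separation hpq
  have hUO : IsOpen (O ∩ baseProj ⁻¹' U) := hO.inter (hU.preimage baseProj.continuous)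
  have hWO : IsOpen (O ∩ baseProj ⁻¹' W) := hO.inter (hW.preimage baseProj.continuous)
  obtain ⟨D₁, u₁, hu₁, hgraph₁, hpD₁, -⟩ := exists_isBurgersSolution hUO ⟨hp, hpU⟩ 0
  obtain ⟨D₂, u₂, hu₂, hgraph₂, hqD₂, -⟩ := exists_isBurgersSolution hWO ⟨hq, hqW⟩ 0
  have hD : Disjoint D₁ D₂ := hUW.mono (fun r hr => (hgraph₁ (mem_image_of_mem _ hr)).2)
    fun r hr => (hgraph₂ (mem_image_of_mem _ hr)).2
  obtain ⟨u, hu, hgraph⟩ := hu₁.exists_union hu₂ hD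
  obtain ⟨D', u', -, himage⟩ := hΦ _ u hu <| hgraph ▸
    union_subset (hgraph₁.trans inter_subset_left) (hgraph₂.trans inter_subset_left)
  have hΦp : Φ p ∈ burgersGraph D' u' := himage ▸ mem_image_of_mem Φ (hgraph ▸ Or.inl hpD₁)
  have hΦq : Φ q ∈ burgersGraph D' u' := himage ▸ mem_image_of_mem Φ (hgraph ▸ Or.inr hqD₂)
  exact hpq (congrArg baseProj (hinj hp hq (injOn_baseProj_burgersGraph hΦp hΦq h)))

/-- The tangent plane at a point `(t, x, v)` of the graph of a solution of the Burgers equation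
whose `x`-derivative is `c`. -/
def tangentPlane (c v : ℝ) : Set (ℝ × ℝ × ℝ) :=
  {w | w.2.2 = c * (w.2.1 - v * w.1)}

lemma mem_tangentPlane {c v : ℝ} {w : ℝ × ℝ × ℝ} :
    w ∈ tangentPlane c v ↔ w.2.2 = c * (w.2.1 - v * w.1) := Iff.rfl

lemma PreservesBurgersGraphs.exists_mapsTo_tangentPlane (hΦ : PreservesBurgersGraphs O Φ)
    (hO : IsOpen O) {p : ℝ × ℝ × ℝ} (hp : p ∈ O) (hdiff : DifferentiableAt ℝ Φ p) (c : ℝ) :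
    ∃ m, MapsTo (fderiv ℝ Φ p) (tangentPlane c p.2.2) (tangentPlane m (Φ p).2.2) := by
  obtain ⟨D, u, hu, hgraph, hpD, rfl⟩ := exists_isBurgersSolution hO hp c
  obtain ⟨D', u', hu', himage⟩ := hΦ D u hu hgraph
  obtain ⟨r, hr, rfl⟩ := hpD
  have hlift : HasFDerivAt (fun r : ℝ × ℝ => (r.1, r.2, u r)) _ r :=
    hasFDerivAt_fst.prodMk (hasFDerivAt_snd.prodMk (hu.differentiableAt hr).hasFDerivAt)
  have hΦlift := hdiff.hasFDerivAt.comp r hlift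
  have hmem : ∀ r ∈ D, Φ (r.1, r.2, u r) ∈ burgersGraph D' u' := fun r hr =>
    himage ▸ mem_image_of_mem Φ (mem_image_of_mem _ hr)
  obtain ⟨hΦr, hvalue⟩ := mem_burgersGraph.mp (hmem r hr)
  have hcomp : (fun r : ℝ × ℝ => (Φ (r.1, r.2, u r)).2.2) =ᶠ[𝓝 r]
      fun r => u' (baseProj (Φ (r.1, r.2, u r))) :=
    mem_of_superset (hu.1.mem_nhds hr) fun r hr => (mem_burgersGraph.mp (hmem r hr)).2
  have hderiv := hΦlift.snd.snd.unique <|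
    (((hu'.differentiableAt hΦr).hasFDerivAt.comp r
      (baseProj.hasFDerivAt.comp r hΦlift)).congr_of_eventuallyEq hcomp)
  refine ⟨fderiv ℝ u' (baseProj (Φ (r.1, r.2, u r))) (0, 1), fun w hw => ?_⟩
  have hw_lift : w = (w.1, w.2.1, fderiv ℝ u r (baseProj w)) :=
    Prod.ext rfl (Prod.ext rfl (Eq.trans hw (hu.fderiv_apply hr (baseProj w)).symm))
  rw [hw_lift]
  refine (DFunLike.congr_fun hderiv (baseProj w)).trans ?_
  refine (hu'.fderiv_apply hΦr _).trans ?_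
  rw [← hvalue]
  rfl

lemma exists_map_eq_smul_of_mapsTo_tangentPlane {M : ℝ × ℝ × ℝ →L[ℝ] ℝ × ℝ × ℝ} {v V : ℝ}
    (hM : Function.Surjective M)
    (h : ∀ c, ∃ m, MapsTo M (tangentPlane c v) (tangentPlane m V)) :
    ∃ a : ℝ, M (1, v, 0) = a • (1, V, 0) := by
  obtain ⟨m₀, hm₀⟩ := h 0
  obtain ⟨m₁, hm₁⟩ := h 1
  have hne : m₀ ≠ m₁ := by
    rintro rfl
    have hall (w : ℝ × ℝ × ℝ) : M w ∈ tangentPlane m₀ V := by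
      have hsplit : w = (w.1, w.2.1 - w.2.2, 0) + (0, w.2.2, w.2.2) := by simp
      have hw₀ : M (w.1, w.2.1 - w.2.2, 0) ∈ tangentPlane m₀ V := hm₀ (by simp [mem_tangentPlane])
      have hw₁ : M (0, w.2.2, w.2.2) ∈ tangentPlane m₀ V := hm₁ (by simp [mem_tangentPlane])
      rw [hsplit, map_add]
      simp only [mem_tangentPlane, Prod.fst_add, Prod.snd_add] at hw₀ hw₁ ⊢
      linear_combination hw₀ + hw₁
    obtain ⟨w, hw⟩ := hM (0, 0, 1)
    simpa [hw, mem_tangentPlane] using hall w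
  have h₀ := hm₀ (show (1, v, 0) ∈ tangentPlane 0 v by simp [mem_tangentPlane])
  have h₁ := hm₁ (show (1, v, 0) ∈ tangentPlane 1 v by simp [mem_tangentPlane])
  simp only [mem_tangentPlane] at h₀ h₁
  have hslope : (M (1, v, 0)).2.1 - V * (M (1, v, 0)).1 = 0 := by
    refine (mul_eq_zero.mp ?_).resolve_left (sub_ne_zero.mpr hne)
    linear_combination h₁ - h₀
  refine ⟨(M (1, v, 0)).1, ?_⟩
  ext
  · simp
  · simp only [Prod.smul_mk, smul_eq_mul]
    linear_combination hslope
  · simp [h₀, hslope]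

end GraphPreservingMaps

section Characteristics

variable {Φ Ψ : ℝ × ℝ × ℝ → ℝ × ℝ × ℝ} {O₁ O₂ : Set (ℝ × ℝ × ℝ)}

/-- The infinitesimal form of preserving Burgers solutions at `p = (t, x, v)`: the derivative of
`Φ` preserves both the vertical direction and the characteristic direction `(1, v, 0)`. -/
structure PreservesCharacteristicsAt (Φ : ℝ × ℝ × ℝ → ℝ × ℝ × ℝ) (p : ℝ × ℝ × ℝ) : Prop where
  differentiableAt : DifferentiableAt ℝ Φ p
  injective : Function.Injective (fderiv ℝ Φ p)
  vertical : baseProj (fderiv ℝ Φ p (0, 0, 1)) = 0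
  characteristic : ∃ a : ℝ, fderiv ℝ Φ p (1, p.2.2, 0) = a • (1, (Φ p).2.2, 0)

lemma PreservesCharacteristicsAt.exists_ne_zero_characteristic {p : ℝ × ℝ × ℝ}
    (h : PreservesCharacteristicsAt Φ p) :
    ∃ a : ℝ, a ≠ 0 ∧ fderiv ℝ Φ p (1, p.2.2, 0) = a • (1, (Φ p).2.2, 0) := by
  obtain ⟨a, ha⟩ := h.characteristic
  refine ⟨a, ?_, ha⟩
  rintro rfl
  rw [zero_smul, map_eq_zero_iff _ h.injective] at ha
  simp at ha

lemma leftInverse_fderiv {E F : Type*} [NormedAddCommGroup E] [NormedSpace ℝ E]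
    [NormedAddCommGroup F] [NormedSpace ℝ F] {f : E → F} {g : F → E} {p : E}
    (hf : DifferentiableAt ℝ f p) (hg : DifferentiableAt ℝ g (f p))
    (hgf : ∀ᶠ q in 𝓝 p, g (f q) = q) :
    Function.LeftInverse (fderiv ℝ g (f p)) (fderiv ℝ f p) := by
  have hcomp : HasFDerivAt id ((fderiv ℝ g (f p)).comp (fderiv ℝ f p)) p :=
    (hg.hasFDerivAt.comp p hf.hasFDerivAt).congr_of_eventuallyEq (hgf.mono fun q hq => hq.symm)
  exact DFunLike.congr_fun (hcomp.unique (hasFDerivAt_id p))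

lemma eq_smul_of_baseProj_eq_zero {w : ℝ × ℝ × ℝ} (hw : baseProj w = 0) :
    w = w.2.2 • (0, 0, 1) := by
  have hfst : w.1 = 0 := congrArg Prod.fst hw
  have hsnd : w.2.1 = 0 := congrArg Prod.snd hw
  ext <;> simp [hfst, hsnd]

lemma baseProj_fderiv_vertical_eq_zero {q : ℝ × ℝ × ℝ} (hΨ : DifferentiableAt ℝ Ψ q)
    (h : ∀ᶠ q' in 𝓝 q, baseProj q' = baseProj q → baseProj (Ψ q') = baseProj (Ψ q)) :
    baseProj (fderiv ℝ Ψ q (0, 0, 1)) = 0 := by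
  have hfibre : HasDerivAt (fun δ : ℝ => q + δ • ((0, 0, 1) : ℝ × ℝ × ℝ)) (0, 0, 1) 0 := by
    simpa using ((hasDerivAt_id (0 : ℝ)).smul_const ((0, 0, 1) : ℝ × ℝ × ℝ)).const_add q
  have htendsto : Tendsto (fun δ : ℝ => q + δ • ((0, 0, 1) : ℝ × ℝ × ℝ)) (𝓝 0) (𝓝 q) := by
    simpa using hfibre.continuousAt.tendsto
  have hderiv := baseProj.hasFDerivAt.comp_hasDerivAt (0 : ℝ)
    (HasFDerivAt.comp_hasDerivAt (l := Ψ) (0 : ℝ) (by simpa using hΨ.hasFDerivAt) hfibre)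
  exact hderiv.unique ((hasDerivAt_const (0 : ℝ) (baseProj (Ψ q))).congr_of_eventuallyEq
    ((htendsto.eventually h).mono fun δ hδ => hδ (by simp)))

lemma PreservesBurgersGraphs.preservesCharacteristicsAt (hΦ : PreservesBurgersGraphs O₁ Φ)
    (hO₁ : IsOpen O₁) (hO₂ : IsOpen O₂) (hdΦ : DifferentiableOn ℝ Φ O₁)
    (hdΨ : DifferentiableOn ℝ Ψ O₂) (hmaps : MapsTo Φ O₁ O₂) (hmaps' : MapsTo Ψ O₂ O₁)
    (hinv : LeftInvOn Ψ Φ O₁) (hinv' : RightInvOn Ψ Φ O₂) {p : ℝ × ℝ × ℝ} (hp : p ∈ O₁) :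
    PreservesCharacteristicsAt Φ p := by
  have hO₂p : O₂ ∈ 𝓝 (Φ p) := hO₂.mem_nhds (hmaps hp)
  have hΦp : DifferentiableAt ℝ Φ p := hdΦ.differentiableAt (hO₁.mem_nhds hp)
  have hΨp : DifferentiableAt ℝ Ψ (Φ p) := hdΨ.differentiableAt hO₂p
  have hleft : Function.LeftInverse (fderiv ℝ Ψ (Φ p)) (fderiv ℝ Φ p) :=
    leftInverse_fderiv hΦp hΨp (eventually_of_mem (hO₁.mem_nhds hp) fun _ => hinv.eq)
  have hright : Function.LeftInverse (fderiv ℝ Φ p) (fderiv ℝ Ψ (Φ p)) := by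
    have := leftInverse_fderiv hΨp (by rwa [hinv hp]) (eventually_of_mem hO₂p fun _ => hinv'.eq)
    rwa [hinv hp] at this
  have hvertical : baseProj (fderiv ℝ Ψ (Φ p) (0, 0, 1)) = 0 := by
    refine baseProj_fderiv_vertical_eq_zero hΨp (eventually_of_mem hO₂p fun q hq hbase => ?_)
    rw [hinv hp]
    exact hΦ.baseProj_eq hO₁ hinv.injOn (hmaps' hq) hp (by rwa [hinv'.eq hq])
  refine ⟨hΦp, hleft.injective, ?_,
    exists_map_eq_smul_of_mapsTo_tangentPlane hright.surjective
      (hΦ.exists_mapsTo_tangentPlane hO₁ hp hΦp)⟩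
  obtain ⟨β, hβ⟩ : ∃ β : ℝ, fderiv ℝ Ψ (Φ p) (0, 0, 1) = β • (0, 0, 1) :=
    ⟨_, eq_smul_of_baseProj_eq_zero hvertical⟩
  have hsmul : ((0, 0, 1) : ℝ × ℝ × ℝ) = β • fderiv ℝ Φ p (0, 0, 1) := by
    rw [← map_smul, ← hβ, hright]
  have hβ_ne : β ≠ 0 := by
    rintro rfl
    simp at hsmul
  refine (smul_eq_zero.mp ?_).resolve_left hβ_ne
  rw [← map_smul, ← hsmul]
  simp

end Characteristics

section InducedPlaneMap

variable {Φ : ℝ × ℝ × ℝ → ℝ × ℝ × ℝ} {B : Set (ℝ × ℝ)} {J : Set ℝ}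

/-- The map of the plane of independent variables that `Φ` induces on the slice of slope `v`. -/
def planeMap (Φ : ℝ × ℝ × ℝ → ℝ × ℝ × ℝ) (v : ℝ) (r : ℝ × ℝ) : ℝ × ℝ :=
  baseProj (Φ (r.1, r.2, v))

lemma planeMap_eq_of_preservesCharacteristicsAt {r : ℝ × ℝ} (hJ : IsOpen J) (hJc : IsPreconnected J)
    (h : ∀ v ∈ J, PreservesCharacteristicsAt Φ (r.1, r.2, v)) {v w : ℝ} (hv : v ∈ J) (hw : w ∈ J) :
    planeMap Φ v r = planeMap Φ w r := by
  have hderiv : ∀ v ∈ J, HasDerivAt (fun v => planeMap Φ v r) 0 v := fun v hv => by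
    have hfibre : HasDerivAt (fun v : ℝ => (r.1, r.2, v)) (0, 0, 1) v :=
      (hasDerivAt_const v r.1).prodMk ((hasDerivAt_const v r.2).prodMk (hasDerivAt_id v))
    rw [← (h v hv).vertical]
    exact baseProj.hasFDerivAt.comp_hasDerivAt v
      (HasFDerivAt.comp_hasDerivAt (l := Φ) v (h v hv).differentiableAt.hasFDerivAt hfibre)
  exact hJ.is_const_of_deriv_eq_zero hJc
    (fun v hv => (hderiv v hv).differentiableAt.differentiableWithinAt)
    (fun v hv => (hderiv v hv).deriv) hv hw

namespace PreservesCharacteristicsAt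

variable {r : ℝ × ℝ} {v : ℝ}

lemma fderiv_planeMap_apply (h : PreservesCharacteristicsAt Φ (r.1, r.2, v)) (y : ℝ × ℝ) :
    fderiv ℝ (planeMap Φ v) r y = baseProj (fderiv ℝ Φ (r.1, r.2, v) (y.1, y.2, 0)) := by
  have hslice : HasFDerivAt (fun r : ℝ × ℝ => (r.1, r.2, v))
      ((ContinuousLinearMap.fst ℝ ℝ ℝ).prod ((ContinuousLinearMap.snd ℝ ℝ ℝ).prod 0)) r :=
    hasFDerivAt_fst.prodMk (hasFDerivAt_snd.prodMk (hasFDerivAt_const v r))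
  exact DFunLike.congr_fun (baseProj.hasFDerivAt.comp r
    (h.differentiableAt.hasFDerivAt.comp r hslice)).fderiv y

lemma injective_fderiv_planeMap (h : PreservesCharacteristicsAt Φ (r.1, r.2, v)) :
    Function.Injective (fderiv ℝ (planeMap Φ v) r) := by
  refine (injective_iff_map_eq_zero _).mpr fun y hy => ?_
  have hbase : baseProj (fderiv ℝ Φ (r.1, r.2, v) (y.1, y.2, 0)) = 0 := by
    rw [← h.fderiv_planeMap_apply, hy]
  obtain ⟨β, hβ⟩ : ∃ β : ℝ, fderiv ℝ Φ (r.1, r.2, v) (y.1, y.2, 0) = β • (0, 0, 1) :=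
    ⟨_, eq_smul_of_baseProj_eq_zero hbase⟩
  obtain ⟨γ, hγ⟩ : ∃ γ : ℝ, fderiv ℝ Φ (r.1, r.2, v) (0, 0, 1) = γ • (0, 0, 1) :=
    ⟨_, eq_smul_of_baseProj_eq_zero h.vertical⟩
  have hγ_ne : γ ≠ 0 := by
    rintro rfl
    have := h.injective (hγ.trans (by simp : _ = fderiv ℝ Φ (r.1, r.2, v) 0))
    simp at this
  have hcancel : γ • ((y.1, y.2, 0) : ℝ × ℝ × ℝ) = β • (0, 0, 1) := h.injective <| by
    rw [map_smul, map_smul, hβ, hγ, smul_comm]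
  simpa [hγ_ne, Prod.ext_iff] using congrArg baseProj hcancel

lemma det_fderiv_planeMap_ne_zero (h : PreservesCharacteristicsAt Φ (r.1, r.2, v)) :
    LinearMap.det (fderiv ℝ (planeMap Φ v) r : ℝ × ℝ →ₗ[ℝ] ℝ × ℝ) ≠ 0 := fun hdet =>
  (LinearMap.bot_lt_ker_of_det_eq_zero hdet).ne' (LinearMap.ker_eq_bot.mpr
    h.injective_fderiv_planeMap)

end PreservesCharacteristicsAt

-- Along such a curve the slope is constant, so the curve is a straight segment, and by Rolle's
-- theorem it does not close up.
lemma exists_sub_eq_smul_of_hasDerivAt_characteristic {γ : ℝ → ℝ × ℝ × ℝ} {a : ℝ → ℝ}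
    (hγ : ∀ θ ∈ Icc (0 : ℝ) 1, HasDerivAt γ (a θ • (1, (γ θ).2.2, 0)) θ)
    (ha : ∀ θ ∈ Icc (0 : ℝ) 1, a θ ≠ 0) :
    ∃ τ : ℝ, τ ≠ 0 ∧ γ 1 - γ 0 = τ • (1, (γ 0).2.2, 0) := by
  have hconst {f f' : ℝ → ℝ} (hf : ∀ θ ∈ Icc (0 : ℝ) 1, HasDerivAt f (f' θ) θ)
      (hf' : ∀ θ ∈ Icc (0 : ℝ) 1, f' θ = 0) : ∀ θ ∈ Icc (0 : ℝ) 1, f θ = f 0 :=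
    constant_of_has_deriv_right_zero (fun θ hθ => (hf θ hθ).continuousAt.continuousWithinAt)
      fun θ hθ => hf' θ (Ico_subset_Icc_self hθ) ▸ (hf θ (Ico_subset_Icc_self hθ)).hasDerivWithinAt
  have hT : ∀ θ ∈ Icc (0 : ℝ) 1, HasDerivAt (fun θ => (γ θ).1) (a θ) θ := fun θ hθ =>
    (hγ θ hθ).hasFDerivAt.fst.hasDerivAt.congr_deriv (by simp)
  have hX : ∀ θ ∈ Icc (0 : ℝ) 1, HasDerivAt (fun θ => (γ θ).2.1) (a θ * (γ θ).2.2) θ :=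
    fun θ hθ => (hγ θ hθ).hasFDerivAt.snd.fst.hasDerivAt.congr_deriv (by simp)
  have hV : ∀ θ ∈ Icc (0 : ℝ) 1, (γ θ).2.2 = (γ 0).2.2 :=
    hconst (fun θ hθ => (hγ θ hθ).snd.snd) (fun θ _ => by simp)
  have hline : ∀ θ ∈ Icc (0 : ℝ) 1,
      (γ θ).2.1 - (γ 0).2.2 * (γ θ).1 = (γ 0).2.1 - (γ 0).2.2 * (γ 0).1 :=
    hconst (fun θ hθ => (hX θ hθ).sub ((hT θ hθ).const_mul (γ 0).2.2))
      (fun θ hθ => by rw [hV θ hθ]; ring)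
  have h₁ : (1 : ℝ) ∈ Icc (0 : ℝ) 1 := right_mem_Icc.mpr zero_le_one
  refine ⟨(γ 1).1 - (γ 0).1, fun hclosed => ?_, ?_⟩
  · obtain ⟨θ, hθ, hzero⟩ := exists_hasDerivAt_eq_zero zero_lt_one
      (fun θ hθ => (hT θ hθ).continuousAt.continuousWithinAt) (sub_eq_zero.mp hclosed).symm
      fun θ hθ => hT θ (Ioo_subset_Icc_self hθ)
    exact ha θ (Ioo_subset_Icc_self hθ) hzero
  · ext
    · simp
    · simp only [Prod.snd_sub, Prod.fst_sub, Prod.smul_snd, Prod.smul_fst, smul_eq_mul]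
      linear_combination hline 1 h₁
    · simp [hV 1 h₁]

lemma exists_planeMap_sub_eq_smul_fderiv (hB : Convex ℝ B) {v : ℝ}
    (h : ∀ r ∈ B, PreservesCharacteristicsAt Φ (r.1, r.2, v)) {r r' : ℝ × ℝ} (hr : r ∈ B)
    (hr' : r' ∈ B) {τ : ℝ} (hτ : τ ≠ 0) (hrr' : r' - r = τ • (1, v)) :
    ∃ κ : ℝ, κ ≠ 0 ∧ planeMap Φ v r' - planeMap Φ v r =
      κ • fderiv ℝ (planeMap Φ v) r (r' - r) := by
  have hsegment : ∀ θ ∈ Icc (0 : ℝ) 1, r + θ • (r' - r) ∈ B := fun θ hθ =>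
    hB.add_smul_sub_mem hr hr' hθ
  choose! a ha_ne ha using fun r hr => (h r hr).exists_ne_zero_characteristic
  let γ (θ : ℝ) : ℝ × ℝ × ℝ := Φ (r.1 + θ * τ, r.2 + θ * (τ * v), v)
  have hpoint (θ : ℝ) : r + θ • (r' - r) = (r.1 + θ * τ, r.2 + θ * (τ * v)) := by
    rw [hrr']; ext <;> simp
  have hγ : ∀ θ ∈ Icc (0 : ℝ) 1,
      HasDerivAt γ ((τ * a (r + θ • (r' - r))) • (1, (γ θ).2.2, 0)) θ := fun θ hθ => by
    have hpath : HasDerivAt (fun θ : ℝ => (r.1 + θ * τ, r.2 + θ * (τ * v), v))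
        (τ • (1, v, 0)) θ := by
      simpa using (((hasDerivAt_id θ).mul_const τ).const_add r.1).prodMk
        ((((hasDerivAt_id θ).mul_const (τ * v)).const_add r.2).prodMk (hasDerivAt_const θ v))
    have hmem := hsegment θ hθ
    rw [hpoint] at hmem ⊢
    refine (HasFDerivAt.comp_hasDerivAt (l := Φ) θ
      (h _ hmem).differentiableAt.hasFDerivAt hpath).congr_deriv ?_
    rw [map_smul, ha _ hmem, smul_smul]
  obtain ⟨σ, hσ, hchord⟩ := exists_sub_eq_smul_of_hasDerivAt_characteristic hγ
    fun θ hθ => mul_ne_zero hτ (ha_ne _ (hsegment θ hθ))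
  refine ⟨σ / (τ * a r), div_ne_zero hσ (mul_ne_zero hτ (ha_ne r hr)), ?_⟩
  have hγ₀ : γ 0 = Φ (r.1, r.2, v) := by simp [γ]
  have hγ₁ : γ 1 = Φ (r'.1, r'.2, v) := by
    have hr'_eq : r' = (r.1 + 1 * τ, r.2 + 1 * (τ * v)) := by
      rw [← hpoint, one_smul, add_sub_cancel]
    rw [hr'_eq]
  rw [hrr', map_smul, (h r hr).fderiv_planeMap_apply, ha r hr, map_smul, smul_smul, smul_smul,
    mul_assoc, div_mul_cancel₀ _ (mul_ne_zero hτ (ha_ne r hr)), planeMap, planeMap, ← map_sub,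
    ← hγ₀, ← hγ₁, hchord, map_smul]

/-- The cone of plane vectors whose slope lies in `J`: the directions of the segments whose images
under the induced plane map are known to be straight. -/
def slopeCone (J : Set ℝ) : Set (ℝ × ℝ) := {y | y.1 ≠ 0 ∧ y.2 / y.1 ∈ J}

lemma isOpen_slopeCone (hJ : IsOpen J) : IsOpen (slopeCone J) :=
  (continuousOn_snd.div continuousOn_fst fun _ hy => hy).isOpen_inter_preimage
    (isOpen_ne_fun continuous_fst continuous_const) hJ

lemma smul_mem_slopeCone {δ v : ℝ} (hδ : δ ≠ 0) (hv : v ∈ J) : δ • (1, v) ∈ slopeCone J := by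
  refine ⟨by simpa using hδ, ?_⟩
  simpa [hδ] using hv

-- The apexes are `r₀ ± δ (1, v₀ ± η)`: they see `r₀` along the slopes `v₀ ± η` and each other
-- along the slope `v₀`.
lemma exists_triangle_of_slopeCone {r₀ : ℝ × ℝ} {v₀ : ℝ} (hB : B ∈ 𝓝 r₀) (hJ : J ∈ 𝓝 v₀) :
    ∃ p ∈ B, ∃ q ∈ B, q - p ∈ slopeCone J ∧ r₀ - p ∈ slopeCone J ∧ r₀ - q ∈ slopeCone J ∧
      areaForm (q - p) (r₀ - p) ≠ 0 := by
  obtain ⟨η, hη_sub, hη_add, hη⟩ : ∃ η : ℝ, v₀ - η ∈ J ∧ v₀ + η ∈ J ∧ η ≠ 0 := by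
    have hsub : Tendsto (fun η : ℝ => v₀ - η) (𝓝[≠] 0) (𝓝 v₀) := by
      simpa using (tendsto_const_nhds.sub tendsto_id).mono_left (nhdsWithin_le_nhds (a := (0 : ℝ)))
    have hadd : Tendsto (fun η : ℝ => v₀ + η) (𝓝[≠] 0) (𝓝 v₀) := by
      simpa using (tendsto_const_nhds.add tendsto_id).mono_left (nhdsWithin_le_nhds (a := (0 : ℝ)))
    exact ((hsub.eventually_mem hJ).and ((hadd.eventually_mem hJ).and self_mem_nhdsWithin)).exists
  have hline (y : ℝ × ℝ) : Tendsto (fun δ : ℝ => r₀ + δ • y) (𝓝[≠] 0) (𝓝 r₀) := by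
    simpa using (tendsto_const_nhds.add (tendsto_id.smul_const y)).mono_left
      (nhdsWithin_le_nhds (a := (0 : ℝ)))
  obtain ⟨δ, hp, hq, hδ⟩ := (((hline (-(1, v₀ - η))).eventually_mem hB).and
    (((hline (1, v₀ + η)).eventually_mem hB).and self_mem_nhdsWithin)).exists
  have hδ : δ ≠ 0 := hδ
  have hqp : r₀ + δ • (1, v₀ + η) - (r₀ + δ • -(1, v₀ - η)) = (2 * δ) • (1, v₀) := by
    ext <;> simp only [Prod.fst_sub, Prod.snd_sub, Prod.fst_add, Prod.snd_add, Prod.smul_mk,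
      Prod.neg_mk, smul_eq_mul] <;> ring
  have hrp : r₀ - (r₀ + δ • -(1, v₀ - η)) = δ • (1, v₀ - η) := by
    rw [smul_neg, ← sub_eq_add_neg, sub_sub_cancel]
  have hrq : r₀ - (r₀ + δ • (1, v₀ + η)) = (-δ) • (1, v₀ + η) := by simp
  refine ⟨_, hp, _, hq, ?_, ?_, ?_, ?_⟩
  · rw [hqp]
    exact smul_mem_slopeCone (mul_ne_zero two_ne_zero hδ) (mem_of_mem_nhds hJ)
  · rw [hrp]
    exact smul_mem_slopeCone hδ hη_sub
  · rw [hrq]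
    exact smul_mem_slopeCone (neg_ne_zero.mpr hδ) hη_add
  · have harea : areaForm ((2 * δ) • (1, v₀)) (δ • (1, v₀ - η)) = -2 * δ ^ 2 * η := by
      simp only [areaForm, Prod.smul_fst, Prod.smul_snd, smul_eq_mul]
      ring
    rw [hqp, hrp, harea]
    exact mul_ne_zero (mul_ne_zero (by norm_num) (pow_ne_zero 2 hδ)) hη

lemma neg_mem_slopeCone {y : ℝ × ℝ} (hy : y ∈ slopeCone J) : -y ∈ slopeCone J := by
  simpa [slopeCone] using hy

lemma exists_planeMap_sub_eq_smul_fderiv_of_mem_slopeCone (hBo : IsOpen B) (hB : Convex ℝ B)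
    (hJo : IsOpen J) (hJ : IsPreconnected J)
    (h : ∀ r ∈ B, ∀ v ∈ J, PreservesCharacteristicsAt Φ (r.1, r.2, v)) {v₀ : ℝ} (hv₀ : v₀ ∈ J)
    {r r' : ℝ × ℝ} (hr : r ∈ B) (hr' : r' ∈ B) (hrr' : r' - r ∈ slopeCone J) :
    ∃ κ : ℝ, κ ≠ 0 ∧ planeMap Φ v₀ r' - planeMap Φ v₀ r =
      κ • fderiv ℝ (planeMap Φ v₀) r (r' - r) := by
  obtain ⟨hτ, hv⟩ := hrr'
  have hslope : EqOn (planeMap Φ v₀) (planeMap Φ ((r' - r).2 / (r' - r).1)) B := fun r hr =>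
    planeMap_eq_of_preservesCharacteristicsAt hJo hJ (h r hr) hv₀ hv
  rw [hslope hr, hslope hr', (hslope.eventuallyEq_of_mem (hBo.mem_nhds hr)).fderiv_eq]
  refine exists_planeMap_sub_eq_smul_fderiv hB (fun r hr => h r hr _ hv) hr hr' hτ ?_
  ext
  · simp
  · simp only [Prod.smul_snd, smul_eq_mul, mul_div_cancel₀ _ hτ]

lemma exists_isProjectiveImage_planeMap (hBo : IsOpen B) (hB : Convex ℝ B)
    (hJo : IsOpen J) (hJ : IsPreconnected J)
    (h : ∀ r ∈ B, ∀ v ∈ J, PreservesCharacteristicsAt Φ (r.1, r.2, v)) {r₀ : ℝ × ℝ} {v₀ : ℝ}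
    (hr₀ : r₀ ∈ B) (hv₀ : v₀ ∈ J) :
    ∃ s : Matrix (Fin 3) (Fin 3) ℝ, IsUnit s.det ∧
      ∀ᶠ r in 𝓝 r₀, IsProjectiveImage s r (planeMap Φ v₀ r) := by
  obtain ⟨p, hp, q, hq, hqp, hr₀p, hr₀q, harea⟩ :=
    exists_triangle_of_slopeCone (hBo.mem_nhds hr₀) (hJo.mem_nhds hv₀)
  have hchord {r r' : ℝ × ℝ} := exists_planeMap_sub_eq_smul_fderiv_of_mem_slopeCone
    hBo hB hJo hJ h hv₀ (r := r) (r' := r')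
  have hdet {r : ℝ × ℝ} (hr : r ∈ B) :=
    (h r hr v₀ hv₀).det_fderiv_planeMap_ne_zero
  obtain ⟨κ, hκ, hPQ⟩ := hchord hp hq hqp
  obtain ⟨κ', -, hQP⟩ := hchord hq hp (by simpa using neg_mem_slopeCone hqp)
  have hQP' : planeMap Φ v₀ q - planeMap Φ v₀ p =
      κ' • fderiv ℝ (planeMap Φ v₀) q (q - p) := by
    rw [← neg_sub, hQP, ← smul_neg, ← map_neg, neg_sub]
  have hne : planeMap Φ v₀ p ≠ planeMap Φ v₀ q := fun heq => by
    rw [heq, sub_self, eq_comm, smul_eq_zero_iff_right hκ] at hPQ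
    have hqp₀ := (h p hp v₀ hv₀).injective_fderiv_planeMap (hPQ.trans (map_zero _).symm)
    exact hqp.1 (congrArg Prod.fst hqp₀)
  obtain ⟨s, hs, himage⟩ := exists_isProjectiveImage_of_pencils (hdet hp) (hdet hq) hne hPQ hQP'
  have hcone (a : ℝ × ℝ) (ha : r₀ - a ∈ slopeCone J) : ∀ᶠ r in 𝓝 r₀, r - a ∈ slopeCone J :=
    (continuous_id.sub continuous_const).continuousAt.eventually_mem
      ((isOpen_slopeCone hJo).mem_nhds ha)
  have harea_near : ∀ᶠ r in 𝓝 r₀, areaForm (q - p) (r - p) ≠ 0 := by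
    have : Continuous fun r => areaForm (q - p) (r - p) := by
      unfold areaForm
      fun_prop
    exact this.continuousAt.eventually_ne harea
  refine ⟨s, hs, ?_⟩
  filter_upwards [hBo.mem_nhds hr₀, hcone p hr₀p, hcone q hr₀q, harea_near]
    with r hr hrp hrq hr_area
  exact himage r _ hr_area ((hchord hp hr hrp).imp fun _ => And.right)
    ((hchord hq hr hrq).imp fun _ => And.right)

lemma exists_isProjectiveImage_baseProj {p₀ : ℝ × ℝ × ℝ}
    (h : ∀ᶠ p in 𝓝 p₀, PreservesCharacteristicsAt Φ p) :
    ∃ s : Matrix (Fin 3) (Fin 3) ℝ, IsUnit s.det ∧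
      ∀ᶠ p in 𝓝 p₀, IsProjectiveImage s (baseProj p) (baseProj (Φ p)) := by
  obtain ⟨ε, hε, hball⟩ := Metric.eventually_nhds_iff_ball.mp h
  have hbox : ∀ r ∈ Metric.ball (baseProj p₀) ε, ∀ v ∈ Metric.ball p₀.2.2 ε,
      PreservesCharacteristicsAt Φ (r.1, r.2, v) := fun r hr v hv => hball _ <| by
    simp only [Metric.mem_ball, Prod.dist_eq, max_lt_iff] at hr hv ⊢
    exact ⟨hr.1, hr.2, hv⟩
  obtain ⟨s, hs, himage⟩ := exists_isProjectiveImage_planeMap Metric.isOpen_ball (convex_ball _ _)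
    Metric.isOpen_ball (convex_ball _ _).isPreconnected hbox (Metric.mem_ball_self hε)
    (Metric.mem_ball_self hε)
  refine ⟨s, hs, ?_⟩
  have hslope : ∀ᶠ p in 𝓝 p₀, p.2.2 ∈ Metric.ball p₀.2.2 ε :=
    (continuous_snd.comp continuous_snd).continuousAt.eventually_mem (Metric.ball_mem_nhds _ hε)
  filter_upwards [baseProj.continuous.continuousAt.eventually himage, hslope,
    baseProj.continuous.continuousAt.eventually_mem (Metric.ball_mem_nhds _ hε)] with p hp hv hr
  rwa [planeMap_eq_of_preservesCharacteristicsAt Metric.isOpen_ball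
    (convex_ball _ _).isPreconnected (hbox _ hr) (Metric.mem_ball_self hε) hv] at hp

end InducedPlaneMap

section SlopeTransformation

variable {s : Matrix (Fin 3) (Fin 3) ℝ}

lemma hasDerivAt_homog {r : ℝ → ℝ × ℝ} {y : ℝ × ℝ} {θ : ℝ} (hr : HasDerivAt r y θ) :
    HasDerivAt (fun η => homog (r η)) ![y.1, y.2, 0] θ := hasDerivAt_pi.mpr fun i => by
  fin_cases i
  exacts [hr.fst, hr.snd, hasDerivAt_const θ 1]

-- With the last coordinate as the factor `ρ`, differentiating `s *ᵥ homog r = ρ • homog R` gives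
-- `s *ᵥ ![y, 0] = ρ' • homog R + ρ • ![Y, 0]`, and the first summand dies in the cross product.
lemma exists_cross_eq_smul_of_hasDerivAt {r R : ℝ → ℝ × ℝ} {y Y : ℝ × ℝ} {θ : ℝ}
    (h : ∀ᶠ η in 𝓝 θ, IsProjectiveImage s (r η) (R η)) (hr : HasDerivAt r y θ)
    (hR : HasDerivAt R Y θ) :
    ∃ c : ℝ, c ≠ 0 ∧ (s *ᵥ homog (r θ)) ⨯₃ (s *ᵥ ![y.1, y.2, 0]) =
      c • homog (R θ) ⨯₃ ![Y.1, Y.2, 0] := by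
  have hfactor : ∀ᶠ η in 𝓝 θ, (s *ᵥ homog (r η)) 2 ≠ 0 ∧
      s *ᵥ homog (r η) = (s *ᵥ homog (r η)) 2 • homog (R η) := h.mono fun η ⟨ρ, hρ, hη⟩ => by
    have hlast : (s *ᵥ homog (r η)) 2 = ρ := by rw [hη]; simp [homog]
    rw [hlast]
    exact ⟨hρ, hη⟩
  have hsr : HasDerivAt (fun η => s *ᵥ homog (r η)) (s *ᵥ ![y.1, y.2, 0]) θ :=
    (Matrix.mulVecLin s).toContinuousLinearMap.hasFDerivAt.comp_hasDerivAt θ (hasDerivAt_homog hr)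
  have hderiv := hsr.unique <| ((hasDerivAt_pi.mp hsr 2).fun_smul
    (hasDerivAt_homog hR)).congr_of_eventuallyEq (hfactor.mono fun η hη => hη.2)
  obtain ⟨hρ, himage⟩ := hfactor.self_of_nhds
  refine ⟨(s *ᵥ homog (r θ)) 2 ^ 2, pow_ne_zero 2 hρ, ?_⟩
  calc (s *ᵥ homog (r θ)) ⨯₃ (s *ᵥ ![y.1, y.2, 0])
      = ((s *ᵥ homog (r θ)) 2 • homog (R θ)) ⨯₃ ((s *ᵥ homog (r θ)) 2 • ![Y.1, Y.2, 0] +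
          (s *ᵥ ![y.1, y.2, 0]) 2 • homog (R θ)) := by rw [← himage, ← hderiv]
    _ = (s *ᵥ homog (r θ)) 2 ^ 2 • homog (R θ) ⨯₃ ![Y.1, Y.2, 0] := by
      simp only [map_add, map_smul, LinearMap.smul_apply, cross_self, smul_zero, add_zero,
        smul_smul, sq]

lemma cross_mulVec_homog (s : Matrix (Fin 3) (Fin 3) ℝ) (t x v : ℝ) :
    (s *ᵥ homog (t, x)) ⨯₃ (s *ᵥ ![1, v, 0]) =
      ![-((-(minor3 s 0 2) * t + minor3 s 0 0) * v + (minor3 s 0 2 * x + minor3 s 0 1)),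
        (-(minor3 s 1 2) * t + minor3 s 1 0) * v + (minor3 s 1 2 * x + minor3 s 1 1),
        -((-(minor3 s 2 2) * t + minor3 s 2 0) * v + (minor3 s 2 2 * x + minor3 s 2 1))] := by
  ext i
  fin_cases i <;>
    simp only [Fin.zero_eta, Fin.mk_one, Fin.reduceFinMk, cross_apply, homog, Matrix.mulVec,
      dotProduct, Fin.sum_univ_three, Matrix.cons_val, minor3, Matrix.det_fin_two,
      Matrix.submatrix_apply, Fin.succAbove, Fin.reduceCastSucc, Fin.reduceSucc, Fin.reduceLT,
      reduceIte] <;>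
    ring

lemma PreservesCharacteristicsAt.apply_eq {Φ : ℝ × ℝ × ℝ → ℝ × ℝ × ℝ} {t x v : ℝ}
    (h : PreservesCharacteristicsAt Φ (t, x, v))
    (hs : ∀ᶠ q in 𝓝 (t, x, v), IsProjectiveImage s (baseProj q) (baseProj (Φ q))) :
    Φ (t, x, v) =
      ((s 0 0 * t + s 0 1 * x + s 0 2) / (s 2 0 * t + s 2 1 * x + s 2 2),
       (s 1 0 * t + s 1 1 * x + s 1 2) / (s 2 0 * t + s 2 1 * x + s 2 2),
       ((-(minor3 s 0 2) * t + minor3 s 0 0) * v + (minor3 s 0 2 * x + minor3 s 0 1)) /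
         ((-(minor3 s 1 2) * t + minor3 s 1 0) * v + (minor3 s 1 2 * x + minor3 s 1 1))) := by
  obtain ⟨a, ha, hchar⟩ := h.exists_ne_zero_characteristic
  have hpath : HasDerivAt (fun θ : ℝ => (t, x, v) + θ • ((1, v, 0) : ℝ × ℝ × ℝ)) (1, v, 0) 0 := by
    simpa using ((hasDerivAt_id (0 : ℝ)).smul_const ((1, v, 0) : ℝ × ℝ × ℝ)).const_add (t, x, v)
  have himage := HasFDerivAt.comp_hasDerivAt (l := Φ) (0 : ℝ)
    (by simpa using h.differentiableAt.hasFDerivAt) hpath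
  rw [hchar] at himage
  have htendsto : Tendsto (fun θ : ℝ => (t, x, v) + θ • ((1, v, 0) : ℝ × ℝ × ℝ)) (𝓝 0)
      (𝓝 (t, x, v)) := by
    simpa using hpath.continuousAt.tendsto
  obtain ⟨c, hc, hcross⟩ := exists_cross_eq_smul_of_hasDerivAt (htendsto.eventually hs)
    (baseProj.hasFDerivAt.comp_hasDerivAt (0 : ℝ) hpath)
    (baseProj.hasFDerivAt.comp_hasDerivAt (0 : ℝ) himage)
  have hstart : (t, x, v) + (0 : ℝ) • ((1, v, 0) : ℝ × ℝ × ℝ) = (t, x, v) := by simp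
  simp only [hstart, baseProj_apply, cross_mulVec_homog] at hcross
  have hden : (-(minor3 s 1 2) * t + minor3 s 1 0) * v + (minor3 s 1 2 * x + minor3 s 1 1) =
      c * a := by
    simpa [cross_apply, homog] using congrFun hcross 1
  have hnum : (-(minor3 s 0 2) * t + minor3 s 0 0) * v + (minor3 s 0 2 * x + minor3 s 0 1) =
      c * a * (Φ (t, x, v)).2.2 :=
    neg_injective <| (congrFun hcross 0).trans (by simp [cross_apply, homog, mul_assoc])
  have hbase := (isProjectiveImage_iff.mp hs.self_of_nhds).2
  rw [hden, hnum, mul_div_cancel_left₀ _ (mul_ne_zero hc ha)]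
  exact Prod.ext (congrArg Prod.fst hbase :) (Prod.ext (congrArg Prod.snd hbase :) rfl)

end SlopeTransformation

theorem stmt0_general
    (O₁ O₂ : Set (ℝ × ℝ × ℝ)) (hO₁ : IsOpen O₁) (hO₂ : IsOpen O₂) (hc₁ : IsConnected O₁)
    (Φ Ψ : ℝ × ℝ × ℝ → ℝ × ℝ × ℝ)
    (hΦ : DifferentiableOn ℝ Φ O₁) (hΨ : DifferentiableOn ℝ Ψ O₂)
    (hmaps : Set.MapsTo Φ O₁ O₂) (hmaps' : Set.MapsTo Ψ O₂ O₁)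
    (hinv : ∀ p ∈ O₁, Ψ (Φ p) = p) (hinv' : ∀ q ∈ O₂, Φ (Ψ q) = q)
    (hsol : ∀ (D : Set (ℝ × ℝ)) (u : ℝ × ℝ → ℝ), IsBurgersSolution D u →
      burgersGraph D u ⊆ O₁ →
      ∃ (D' : Set (ℝ × ℝ)) (u' : ℝ × ℝ → ℝ), IsBurgersSolution D' u' ∧
        Φ '' burgersGraph D u = burgersGraph D' u') :
    ∃ s : Matrix (Fin 3) (Fin 3) ℝ, IsUnit s.det ∧
      ∀ t x v : ℝ, (t, x, v) ∈ O₁ →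
        Φ (t, x, v) =
          ((s 0 0 * t + s 0 1 * x + s 0 2) / (s 2 0 * t + s 2 1 * x + s 2 2),
           (s 1 0 * t + s 1 1 * x + s 1 2) / (s 2 0 * t + s 2 1 * x + s 2 2),
           ((-(minor3 s 0 2) * t + minor3 s 0 0) * v + (minor3 s 0 2 * x + minor3 s 0 1)) /
             ((-(minor3 s 1 2) * t + minor3 s 1 0) * v + (minor3 s 1 2 * x + minor3 s 1 1))) := by
  have hchar : ∀ p ∈ O₁, PreservesCharacteristicsAt Φ p := fun p hp =>
    PreservesBurgersGraphs.preservesCharacteristicsAt hsol hO₁ hO₂ hΦ hΨ hmaps hmaps' hinv hinv' hp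
  obtain ⟨s, hs, himage⟩ := exists_isProjectiveImage_of_locally hc₁ isOpenMap_baseProj fun p hp =>
    exists_isProjectiveImage_baseProj (eventually_of_mem (hO₁.mem_nhds hp) hchar)
  exact ⟨s, hs, fun t x v hp => (hchar _ hp).apply_eq (himage _ hp)⟩

theorem stmt0
    (O₁ O₂ : Set (ℝ × ℝ × ℝ)) (hO₁ : IsOpen O₁) (hO₂ : IsOpen O₂)
    (hc₁ : IsConnected O₁) (hc₂ : IsConnected O₂)
    (Φ Ψ : ℝ × ℝ × ℝ → ℝ × ℝ × ℝ)
    (hΦ : ContDiffOn ℝ 1 Φ O₁) (hΨ : ContDiffOn ℝ 1 Ψ O₂)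
    (hmaps : Set.MapsTo Φ O₁ O₂) (hmaps' : Set.MapsTo Ψ O₂ O₁)
    (hinv : ∀ p ∈ O₁, Ψ (Φ p) = p) (hinv' : ∀ q ∈ O₂, Φ (Ψ q) = q)
    (hsol : ∀ (D : Set (ℝ × ℝ)) (u : ℝ × ℝ → ℝ), IsBurgersSolution D u →
      burgersGraph D u ⊆ O₁ →
      ∃ (D' : Set (ℝ × ℝ)) (u' : ℝ × ℝ → ℝ), IsBurgersSolution D' u' ∧
        Φ '' burgersGraph D u = burgersGraph D' u') :
    ∃ s : Matrix (Fin 3) (Fin 3) ℝ, IsUnit s.det ∧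
      ∀ t x v : ℝ, (t, x, v) ∈ O₁ →
        Φ (t, x, v) =
          ((s 0 0 * t + s 0 1 * x + s 0 2) / (s 2 0 * t + s 2 1 * x + s 2 2),
           (s 1 0 * t + s 1 1 * x + s 1 2) / (s 2 0 * t + s 2 1 * x + s 2 2),
           ((-(minor3 s 0 2) * t + minor3 s 0 0) * v + (minor3 s 0 2 * x + minor3 s 0 1)) /
             ((-(minor3 s 1 2) * t + minor3 s 1 0) * v + (minor3 s 1 2 * x + minor3 s 1 1))) :=
  stmt0_general O₁ O₂ hO₁ hO₂ hc₁ Φ Ψ (hΦ.differentiableOn one_ne_zero)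
    (hΨ.differentiableOn one_ne_zero) hmaps hmaps' hinv hinv' hsol
end

section
/- Let E be a finite-dimensional real vector space, H ⊂ E a hyperplane and e ∈ E with e ∉ H, so that E = ℝe ⊕ H; let P⁽ᵉ⁾_H : E → H and ⟨P⁽ᴴ⁾_e, ·⟩ : E → ℝ be the projections determined by v = P⁽ᵉ⁾_H v + ⟨P⁽ᴴ⁾_e, v⟩·e. Let ker Q = { B ∈ Sym²(E;E) : tr[B(u,·)] = 0 for all u ∈ E }. Then for every B ∈ ker Q there exist unique a ∈ Sym²(H;ℝ) (a symmetric bilinear form on H), b ∈ Sym²(H;H), c : H → H linear, and d ∈ H, such that ⟨P⁽ᴴ⁾_e, B(e+h, e+h)⟩·h − P⁽ᵉ⁾_H B(e+h, e+h) = a(h,h)·h + b(h,h) + c(h) + d for all h ∈ H; and the assignment B ↦ (a,b,c,d) is a linear isomorphism from ker Q onto Sym²(H;ℝ) × Sym²(H;H) × Hom(H,H) × H. -/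
/-- The coefficient equation associating to a symmetric trace-free bilinear map
`B : E × E → E` the quadruple `(a, b, c, d)` of local coefficients of the projective
connection, relative to the splitting `E = ℝe ⊕ H` with projections `P` and `φ`. -/
def ProjCoeffRel {E : Type*} [AddCommGroup E] [Module ℝ E]
    (H : Submodule ℝ E) (e : E) (P : E →ₗ[ℝ] H) (φ : E →ₗ[ℝ] ℝ)
    (B : E →ₗ[ℝ] E →ₗ[ℝ] E)
    (q : (H →ₗ[ℝ] H →ₗ[ℝ] ℝ) × (H →ₗ[ℝ] H →ₗ[ℝ] H) × (H →ₗ[ℝ] H) × H) : Prop :=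
  ∀ h : H, φ (B (e + h) (e + h)) • h - P (B (e + h) (e + h))
    = q.1 h h • h + q.2.1 h h + q.2.2.1 h + q.2.2.2

/-!
In the splitting `E = Ke ⊕ H`, a symmetric `B` consists of the `K`-valued blocks `φ B(x, y)`,
`φ B(e, x)`, `φ B(e, e)` and the `H`-valued blocks `P B(x, y)`, `P B(e, x)`, `P B(e, e)`, with
`x, y ∈ H`. Sorting the coefficient equation by degree in `h` gives
`a(x, y) = φ B(x, y)`, `b(x, y) = φ B(e, x) y + φ B(e, y) x - P B(x, y)`,
`c(x) = φ B(e, e) x - 2 P B(e, x)` and `d = -P B(e, e)`.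
Hence `B` amounts to `(a, b, c, d)` together with the linear form `β = φ B(e, ·)` on `H` and the
scalar `γ = φ B(e, e)`, both of which can be prescribed freely. Taking traces of `b(x, ·)` and
`c` shows that `B` is trace-free exactly when `(dim H + 2) β(x) = tr b(x, ·)` and
`(dim H + 2) γ = tr c`, so the trace condition determines `β` and `γ` from `(a, b, c, d)`.
-/

open Module (finrank)

section CubicCoeffs

variable {R V W : Type*} [CommRing R] [AddCommGroup V] [Module R V] [AddCommGroup W] [Module R W]

theorem eq_of_symm_of_diag_eq [Invertible (2 : R)] {B B' : V →ₗ[R] V →ₗ[R] W}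
    (hB : ∀ x y, B x y = B y x) (hB' : ∀ x y, B' x y = B' y x) (h : ∀ x, B x x = B' x x) :
    B = B' := by
  have hQ : LinearMap.BilinMap.toQuadraticMap B = LinearMap.BilinMap.toQuadraticMap B' :=
    QuadraticMap.ext h
  rw [← QuadraticMap.associated_left_inverse' R (LinearMap.ext₂ fun x y => hB y x), hQ,
    QuadraticMap.associated_left_inverse' R (LinearMap.ext₂ fun x y => hB' y x)]

variable (R V) in
/-- The quadruples `(a, b, c, d)` of coefficients of an inhomogeneous cubic map
`x ↦ a(x, x) x + b(x, x) + c(x) + d` on `V`; no symmetry of `a` and `b` is built in. -/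
abbrev CubicCoeffs : Type _ :=
  (V →ₗ[R] V →ₗ[R] R) × (V →ₗ[R] V →ₗ[R] V) × (V →ₗ[R] V) × V

namespace CubicCoeffs

/-- The symmetry of the bilinear components `a` and `b` of `(a, b, c, d)`, which makes the
quadruple an element of `Sym²(V; R) × Sym²(V; V) × Hom(V, V) × V`. -/
def IsSymm (q : CubicCoeffs R V) : Prop :=
  (∀ x y, q.1 x y = q.1 y x) ∧ ∀ x y, q.2.1 x y = q.2.1 y x

/-- The cubic map `x ↦ a(x, x) x + b(x, x) + c(x) + d` with coefficients `(a, b, c, d)`. -/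
def eval (q : CubicCoeffs R V) (x : V) : V :=
  q.1 x x • x + q.2.1 x x + q.2.2.1 x + q.2.2.2

theorem eval_add (q q' : CubicCoeffs R V) (x : V) : (q + q').eval x = q.eval x + q'.eval x := by
  simp only [eval, Prod.fst_add, Prod.snd_add, LinearMap.add_apply]
  module

theorem eval_smul (t : R) (q : CubicCoeffs R V) (x : V) : (t • q).eval x = t • q.eval x := by
  simp only [eval, Prod.smul_fst, Prod.smul_snd, LinearMap.smul_apply]
  module

end CubicCoeffs

end CubicCoeffs

section Uniqueness

variable {K V : Type*} [Field K] [NeZero (2 : K)] [NeZero (3 : K)] [AddCommGroup V] [Module K V]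

theorem coeffs_eq_zero_of_cubic_eq_zero {p q r s : V}
    (h : ∀ t : K, t ^ 3 • p + t ^ 2 • q + t • r + s = 0) :
    p = 0 ∧ q = 0 ∧ r = 0 ∧ s = 0 := by
  have hs : s = 0 := by simpa using h 0
  have hq : q = 0 := by
    refine (smul_eq_zero_iff_right (two_ne_zero (α := K))).1 ?_
    linear_combination (norm := module) h 1 + h (-1) - (2 : K) • hs
  have hp : p = 0 := by
    refine (smul_eq_zero_iff_right (mul_ne_zero (two_ne_zero (α := K)) three_ne_zero)).1 ?_
    linear_combination (norm := module) h 2 - (2 : K) • h 1 - (2 : K) • hq + hs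
  exact ⟨hp, hq, by simpa [hp, hq, hs] using h 1, hs⟩

theorem CubicCoeffs.IsSymm.eq_of_eval_eq {q q' : CubicCoeffs K V}
    (hq : q.IsSymm) (hq' : q'.IsSymm) (h : ∀ x, q.eval x = q'.eval x) : q = q' := by
  have components (x : V) : (q.1 x x - q'.1 x x) • x = 0 ∧ q.2.1 x x - q'.2.1 x x = 0 ∧
      q.2.2.1 x - q'.2.2.1 x = 0 ∧ q.2.2.2 - q'.2.2.2 = 0 := by
    refine coeffs_eq_zero_of_cubic_eq_zero fun t : K => ?_
    have line := h (t • x)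
    simp only [eval, map_smul, LinearMap.smul_apply] at line
    linear_combination (norm := module) line
  let _ : Invertible (2 : K) := invertibleOfNonzero two_ne_zero
  have ha : q.1 = q'.1 := eq_of_symm_of_diag_eq hq.1 hq'.1 fun x => by
    obtain h0 | rfl := smul_eq_zero.1 (components x).1
    · exact sub_eq_zero.1 h0
    · simp only [map_zero]
  have hb : q.2.1 = q'.2.1 :=
    eq_of_symm_of_diag_eq hq.2 hq'.2 fun x => sub_eq_zero.1 (components x).2.1
  have hc : q.2.2.1 = q'.2.2.1 := LinearMap.ext fun x => sub_eq_zero.1 (components x).2.2.1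
  have hd : q.2.2.2 = q'.2.2.2 := sub_eq_zero.1 (components 0).2.2.2
  exact Prod.ext ha (Prod.ext hb (Prod.ext hc hd))

end Uniqueness

section Blocks

variable {R E W : Type*} [CommRing R] [AddCommGroup E] [Module R E] [AddCommGroup W] [Module R W]
  {H : Submodule R E} {e : E} {P : E →ₗ[R] H} {φ : E →ₗ[R] R}

theorem eq_of_projections_eq (hPφ : ∀ v : E, v = (P v : E) + φ v • e) {v w : E}
    (hP : P v = P w) (hφ : φ v = φ w) : v = w := by
  rw [hPφ v, hPφ w, hP, hφ]

theorem bilin_ext_of_splitting (hPφ : ∀ v : E, v = (P v : E) + φ v • e)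
    {B B' : E →ₗ[R] E →ₗ[R] W} (hB : ∀ u v, B u v = B v u) (hB' : ∀ u v, B' u v = B' v u)
    (hee : B e e = B' e e) (heH : ∀ x : H, B e x = B' e x)
    (hHH : ∀ x y : H, B x y = B' x y) : B = B' := by
  ext u v
  rw [hPφ u, hPφ v]
  simp only [map_add, map_smul, LinearMap.add_apply, LinearMap.smul_apply, hee, heH, hHH,
    hB _ e, hB' _ e]

theorem trace_eq_add_trace_compression [Module.Free R E] [Module.Finite R E]
    [Module.Free R H] [Module.Finite R H]
    (hPφ : ∀ v : E, v = (P v : E) + φ v • e) (A : E →ₗ[R] E) :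
    LinearMap.trace R E A = φ (A e) + LinearMap.trace R H (P ∘ₗ A ∘ₗ H.subtype) := by
  have hA : A = (A ∘ₗ H.subtype) ∘ₗ P + φ.smulRight (A e) := by
    ext v
    conv_lhs => rw [hPφ v]
    simp
  conv_lhs => rw [hA]
  rw [map_add, LinearMap.trace_comp_comm', LinearMap.trace_smulRight, add_comm]

/-- The bilinear map on `E = Re ⊕ H` assembled from its blocks: `s` on `H × H`, `l` on both
`{e} × H` and `H × {e}`, and the value `w` at `(e, e)`. The vector `e` enters only through the
projections `P` and `φ`. -/
def bilinOfBlocks (P : E →ₗ[R] H) (φ : E →ₗ[R] R) (s : H →ₗ[R] H →ₗ[R] W) (l : H →ₗ[R] W)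
    (w : W) : E →ₗ[R] E →ₗ[R] W :=
  s.compl₁₂ P P + φ.smulRight (l ∘ₗ P) + (φ.smulRight (l ∘ₗ P)).flip + φ.smulRight (φ.smulRight w)

theorem bilinOfBlocks_apply (s : H →ₗ[R] H →ₗ[R] W) (l : H →ₗ[R] W) (w : W) (u v : E) :
    bilinOfBlocks P φ s l w u v
      = s (P u) (P v) + φ u • l (P v) + φ v • l (P u) + φ u • φ v • w := rfl

theorem bilinOfBlocks_symm {s : H →ₗ[R] H →ₗ[R] W} (hs : ∀ x y, s x y = s y x) (l : H →ₗ[R] W)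
    (w : W) (u v : E) : bilinOfBlocks P φ s l w u v = bilinOfBlocks P φ s l w v u := by
  rw [bilinOfBlocks_apply, bilinOfBlocks_apply, hs]
  module

end Blocks

section ProjCoeff

variable {R E : Type*} [CommRing R] [AddCommGroup E] [Module R E]

/-- The coefficient equation `ProjCoeffRel` over an arbitrary commutative ring. -/
def IsProjCoeff (H : Submodule R E) (e : E) (P : E →ₗ[R] H) (φ : E →ₗ[R] R)
    (B : E →ₗ[R] E →ₗ[R] E) (q : CubicCoeffs R H) : Prop :=
  ∀ h : H, φ (B (e + h) (e + h)) • h - P (B (e + h) (e + h)) = q.eval h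

/-- The symmetric product `(x, y) ↦ β(x) y + β(y) x` of a linear form with the identity. -/
def symmProdId {V : Type*} [AddCommGroup V] [Module R V] (β : V →ₗ[R] R) : V →ₗ[R] V →ₗ[R] V :=
  β.smulRight LinearMap.id + (β.smulRight LinearMap.id).flip

theorem symmProdId_apply {V : Type*} [AddCommGroup V] [Module R V] (β : V →ₗ[R] R) (x y : V) :
    symmProdId β x y = β x • y + β y • x := rfl

/-- The coefficients `(a, b, c, d)` of a symmetric bilinear map `B`, in terms of its blocks with
respect to the splitting `E = Re ⊕ H`. -/
def projCoeff (H : Submodule R E) (e : E) (P : E →ₗ[R] H) (φ : E →ₗ[R] R)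
    (B : E →ₗ[R] E →ₗ[R] E) : CubicCoeffs R H :=
  ((B.compl₁₂ H.subtype H.subtype).compr₂ φ,
   symmProdId (φ ∘ₗ B e ∘ₗ H.subtype) - (B.compl₁₂ H.subtype H.subtype).compr₂ P,
   φ (B e e) • LinearMap.id - (2 : R) • (P ∘ₗ B e ∘ₗ H.subtype),
   -P (B e e))

variable {H : Submodule R E} {e : E} {P : E →ₗ[R] H} {φ : E →ₗ[R] R}
  {B B' : E →ₗ[R] E →ₗ[R] E} {q q' : CubicCoeffs R H}

theorem projCoeff_quadratic_apply (x y : H) : (projCoeff H e P φ B).2.1 x y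
    = φ (B e x) • y + φ (B e y) • x - P (B x y) := rfl

theorem projCoeff_linear_apply (x : H) :
    (projCoeff H e P φ B).2.2.1 x = φ (B e e) • x - (2 : R) • P (B e x) := rfl

theorem IsProjCoeff.add (h : IsProjCoeff H e P φ B q) (h' : IsProjCoeff H e P φ B' q') :
    IsProjCoeff H e P φ (B + B') (q + q') := fun x => by
  rw [CubicCoeffs.eval_add, ← h x, ← h' x]
  simp only [LinearMap.add_apply, map_add]
  module

theorem IsProjCoeff.smul (t : R) (h : IsProjCoeff H e P φ B q) :
    IsProjCoeff H e P φ (t • B) (t • q) := fun x => by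
  rw [CubicCoeffs.eval_smul, ← h x]
  simp only [LinearMap.smul_apply, map_smul]
  module

theorem isSymm_projCoeff (hB : ∀ u v, B u v = B v u) : (projCoeff H e P φ B).IsSymm := by
  refine ⟨fun x y => congrArg φ (hB x y), fun x y => ?_⟩
  rw [projCoeff_quadratic_apply, projCoeff_quadratic_apply, hB x y, add_comm (φ (B e x) • y)]

theorem isProjCoeff_projCoeff (hB : ∀ u v, B u v = B v u) :
    IsProjCoeff H e P φ B (projCoeff H e P φ B) := fun x => by
  have ha : (projCoeff H e P φ B).1 x x = φ (B x x) := rfl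
  have hd : (projCoeff H e P φ B).2.2.2 = -P (B e e) := rfl
  simp only [CubicCoeffs.eval, ha, projCoeff_quadratic_apply, projCoeff_linear_apply, hd, map_add,
    LinearMap.add_apply, hB x e]
  module

end ProjCoeff

section Splitting

variable {K E : Type*} [Field K] [AddCommGroup E] [Module K E] {H : Submodule K E} {e : E}
  {P : E →ₗ[K] H} {φ : E →ₗ[K] K} {B B' : E →ₗ[K] E →ₗ[K] E} {q : CubicCoeffs K H}

theorem eq_and_eq_of_add_smul_eq (he : e ∉ H) {x y : H} {s t : K}
    (h : (x : E) + s • e = y + t • e) : x = y ∧ s = t := by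
  have hmem : (s - t) • e ∈ H := by
    have : (s - t) • e = ((y - x : H) : E) := by
      rw [AddSubgroupClass.coe_sub]
      linear_combination (norm := module) h
    exact this ▸ (y - x).2
  have hst : s = t := by
    by_contra hne
    exact he ((H.smul_mem_iff (sub_ne_zero.2 hne)).1 hmem)
  subst hst
  exact ⟨Subtype.ext (add_right_cancel h), rfl⟩

theorem projections_add_smul (he : e ∉ H) (hPφ : ∀ v : E, v = (P v : E) + φ v • e)
    (x : H) (t : K) : P (x + t • e) = x ∧ φ (x + t • e) = t :=
  eq_and_eq_of_add_smul_eq he (hPφ _).symm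

theorem projections_coe (he : e ∉ H) (hPφ : ∀ v : E, v = (P v : E) + φ v • e) (x : H) :
    P x = x ∧ φ x = 0 := by
  simpa using projections_add_smul he hPφ x 0

theorem projections_base (he : e ∉ H) (hPφ : ∀ v : E, v = (P v : E) + φ v • e) :
    P e = 0 ∧ φ e = 1 := by
  simpa using projections_add_smul he hPφ 0 1

theorem IsProjCoeff.eq_projCoeff [NeZero (2 : K)] [NeZero (3 : K)]
    (hB : ∀ u v, B u v = B v u) (hq : q.IsSymm) (h : IsProjCoeff H e P φ B q) :
    q = projCoeff H e P φ B :=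
  hq.eq_of_eval_eq (isSymm_projCoeff hB) fun x => (h x).symm.trans (isProjCoeff_projCoeff hB x)

theorem eq_of_projCoeff_eq [NeZero (2 : K)] (hPφ : ∀ v : E, v = (P v : E) + φ v • e)
    (hB : ∀ u v, B u v = B v u) (hB' : ∀ u v, B' u v = B' v u)
    (hq : projCoeff H e P φ B = projCoeff H e P φ B')
    (hβ : ∀ x : H, φ (B e x) = φ (B' e x)) (hγ : φ (B e e) = φ (B' e e)) : B = B' := by
  have ha (x y : H) : φ (B x y) = φ (B' x y) := congrArg (fun q => q.1 x y) hq
  have hb (x y : H) : φ (B e x) • y + φ (B e y) • x - P (B x y)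
      = φ (B' e x) • y + φ (B' e y) • x - P (B' x y) := congrArg (fun q => q.2.1 x y) hq
  have hc (x : H) : φ (B e e) • x - (2 : K) • P (B e x)
      = φ (B' e e) • x - (2 : K) • P (B' e x) := congrArg (fun q => q.2.2.1 x) hq
  have hd : -P (B e e) = -P (B' e e) := congrArg (fun q => q.2.2.2) hq
  simp only [hβ, hγ, sub_right_inj] at hb hc
  exact bilin_ext_of_splitting hPφ hB hB'
    (eq_of_projections_eq hPφ (neg_injective hd) hγ)
    (fun x => eq_of_projections_eq hPφ ((smul_right_inj two_ne_zero).1 (hc x)) (hβ x))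
    (fun x y => eq_of_projections_eq hPφ (hb x y) (ha x y))

/-- The bilinear map `B` whose coefficients are `q = (a, b, c, d)` and whose remaining blocks are
`φ B(e, ·) = β` on `H` and `φ B(e, e) = γ`; the `H`-valued blocks are obtained by solving the
formulas of `projCoeff`, which requires `2 ≠ 0` in `K`. -/
def ofProjCoeff (e : E) (P : E →ₗ[K] H) (φ : E →ₗ[K] K) (q : CubicCoeffs K H) (β : H →ₗ[K] K)
    (γ : K) : E →ₗ[K] E →ₗ[K] E :=
  (bilinOfBlocks P φ (symmProdId β - q.2.1) ((2 : K)⁻¹ • (γ • LinearMap.id - q.2.2.1))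
      (-q.2.2.2)).compr₂ H.subtype
    + (bilinOfBlocks P φ q.1 β γ).compr₂ (LinearMap.toSpanSingleton K E e)

theorem ofProjCoeff_symm (hq : q.IsSymm) (β : H →ₗ[K] K) (γ : K) (u v : E) :
    ofProjCoeff e P φ q β γ u v = ofProjCoeff e P φ q β γ v u := by
  have hs (x y : H) : (symmProdId β - q.2.1) x y = (symmProdId β - q.2.1) y x := by
    rw [LinearMap.sub_apply, LinearMap.sub_apply, LinearMap.sub_apply, LinearMap.sub_apply, hq.2,
      symmProdId_apply, symmProdId_apply, add_comm (β x • y)]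
  simp only [ofProjCoeff, LinearMap.add_apply, LinearMap.compr₂_apply]
  rw [bilinOfBlocks_symm hs, bilinOfBlocks_symm hq.1]

theorem projections_ofProjCoeff (he : e ∉ H) (hPφ : ∀ v : E, v = (P v : E) + φ v • e)
    (β : H →ₗ[K] K) (γ : K) (u v : E) :
    P (ofProjCoeff e P φ q β γ u v) = bilinOfBlocks P φ (symmProdId β - q.2.1)
        ((2 : K)⁻¹ • (γ • LinearMap.id - q.2.2.1)) (-q.2.2.2) u v ∧
      φ (ofProjCoeff e P φ q β γ u v) = bilinOfBlocks P φ q.1 β γ u v :=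
  projections_add_smul he hPφ _ _

theorem coord_ofProjCoeff_base_coe (he : e ∉ H) (hPφ : ∀ v : E, v = (P v : E) + φ v • e)
    (β : H →ₗ[K] K) (γ : K) (x : H) : φ (ofProjCoeff e P φ q β γ e x) = β x := by
  rw [(projections_ofProjCoeff he hPφ β γ e x).2, bilinOfBlocks_apply]
  simp [projections_base he hPφ, projections_coe he hPφ]

theorem coord_ofProjCoeff_base_base (he : e ∉ H) (hPφ : ∀ v : E, v = (P v : E) + φ v • e)
    (β : H →ₗ[K] K) (γ : K) : φ (ofProjCoeff e P φ q β γ e e) = γ := by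
  rw [(projections_ofProjCoeff he hPφ β γ e e).2, bilinOfBlocks_apply]
  simp [projections_base he hPφ]

theorem isProjCoeff_ofProjCoeff [NeZero (2 : K)] (he : e ∉ H)
    (hPφ : ∀ v : E, v = (P v : E) + φ v • e) (β : H →ₗ[K] K) (γ : K) :
    IsProjCoeff H e P φ (ofProjCoeff e P φ q β γ) q := fun x => by
  have hPx : P (e + x) = x := by simp [projections_base he hPφ, projections_coe he hPφ]
  have hφx : φ (e + x) = 1 := by simp [projections_base he hPφ, projections_coe he hPφ]
  have half (y : H) : (2 : K)⁻¹ • y + (2 : K)⁻¹ • y = y := by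
    rw [← two_smul K, smul_inv_smul₀ two_ne_zero]
  obtain ⟨hP, hφ⟩ := projections_ofProjCoeff (q := q) he hPφ β γ (e + x) (e + x)
  simp only [bilinOfBlocks_apply, hPx, hφx, one_smul, LinearMap.sub_apply, LinearMap.smul_apply,
    LinearMap.id_apply, symmProdId_apply] at hP hφ
  rw [hP, hφ, CubicCoeffs.eval, add_assoc (_ - _), half]
  module

section Trace

variable [FiniteDimensional K E]

theorem trace_projCoeff_quadratic (hPφ : ∀ v : E, v = (P v : E) + φ v • e)
    (hB : ∀ u v, B u v = B v u) (x : H) :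
    LinearMap.trace K H ((projCoeff H e P φ B).2.1 x)
      = (finrank K H + 2) * φ (B e x) - LinearMap.trace K E (B x) := by
  have hb : (projCoeff H e P φ B).2.1 x = φ (B e x) • LinearMap.id
      + (φ ∘ₗ B e ∘ₗ H.subtype).smulRight x - P ∘ₗ B x ∘ₗ H.subtype := rfl
  rw [hb, trace_eq_add_trace_compression hPφ, hB x e, map_sub, map_add, map_smul,
    LinearMap.trace_id, LinearMap.trace_smulRight, LinearMap.comp_apply, LinearMap.comp_apply,
    Submodule.subtype_apply, smul_eq_mul]
  ring

theorem trace_projCoeff_linear (hPφ : ∀ v : E, v = (P v : E) + φ v • e) :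
    LinearMap.trace K H (projCoeff H e P φ B).2.2.1
      = (finrank K H + 2) * φ (B e e) - 2 * LinearMap.trace K E (B e) := by
  rw [projCoeff, trace_eq_add_trace_compression hPφ, map_sub, map_smul, map_smul,
    LinearMap.trace_id, smul_eq_mul, smul_eq_mul]
  ring

theorem trace_eq_zero_iff_projCoeff [NeZero (2 : K)] (hPφ : ∀ v : E, v = (P v : E) + φ v • e)
    (hB : ∀ u v, B u v = B v u) :
    (∀ u, LinearMap.trace K E (B u) = 0) ↔
      (∀ x : H, (finrank K H + 2) * φ (B e x)
        = LinearMap.trace K H ((projCoeff H e P φ B).2.1 x)) ∧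
      (finrank K H + 2) * φ (B e e) = LinearMap.trace K H (projCoeff H e P φ B).2.2.1 := by
  simp only [trace_projCoeff_quadratic hPφ hB, trace_projCoeff_linear hPφ, eq_comm (b := _ - _),
    sub_eq_self, mul_eq_zero, two_ne_zero, false_or]
  refine ⟨fun h => ⟨fun x : H => h x, h e⟩, fun ⟨hH, he⟩ u => ?_⟩
  rw [hPφ u, map_add, map_add, map_smul, map_smul, hH, he, smul_zero, add_zero]

theorem eq_of_isProjCoeff_of_trace_eq_zero [NeZero (2 : K)] [NeZero (3 : K)]
    (hn : (finrank K H + 2 : K) ≠ 0) (hPφ : ∀ v : E, v = (P v : E) + φ v • e)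
    (hB : ∀ u v, B u v = B v u) (hB' : ∀ u v, B' u v = B' v u)
    (ht : ∀ u, LinearMap.trace K E (B u) = 0) (ht' : ∀ u, LinearMap.trace K E (B' u) = 0)
    (hq : q.IsSymm) (h : IsProjCoeff H e P φ B q) (h' : IsProjCoeff H e P φ B' q) : B = B' := by
  have hqq := (h.eq_projCoeff hB hq).symm.trans (h'.eq_projCoeff hB' hq)
  obtain ⟨hβ, hγ⟩ := (trace_eq_zero_iff_projCoeff hPφ hB).1 ht
  obtain ⟨hβ', hγ'⟩ := (trace_eq_zero_iff_projCoeff hPφ hB').1 ht'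
  refine eq_of_projCoeff_eq hPφ hB hB' hqq (fun x => mul_left_cancel₀ hn ?_)
    (mul_left_cancel₀ hn ?_)
  · rw [hβ, hβ', hqq]
  · rw [hγ, hγ', hqq]

theorem exists_isProjCoeff_of_isSymm [NeZero (2 : K)] [NeZero (3 : K)]
    (hn : (finrank K H + 2 : K) ≠ 0) (he : e ∉ H) (hPφ : ∀ v : E, v = (P v : E) + φ v • e)
    (hq : q.IsSymm) :
    ∃ B : E →ₗ[K] E →ₗ[K] E, ((∀ u v, B u v = B v u) ∧
      ∀ u, LinearMap.trace K E (B u) = 0) ∧ IsProjCoeff H e P φ B q := by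
  let β : H →ₗ[K] K := (finrank K H + 2 : K)⁻¹ • (LinearMap.trace K H ∘ₗ q.2.1)
  let γ : K := (finrank K H + 2 : K)⁻¹ * LinearMap.trace K H q.2.2.1
  have hB := ofProjCoeff_symm (e := e) (P := P) (φ := φ) hq β γ
  have hrel := isProjCoeff_ofProjCoeff (q := q) he hPφ β γ
  refine ⟨ofProjCoeff e P φ q β γ, ⟨hB, ?_⟩, hrel⟩
  rw [trace_eq_zero_iff_projCoeff hPφ hB, ← hrel.eq_projCoeff hB hq,
    coord_ofProjCoeff_base_base he hPφ]
  refine ⟨fun x => ?_, mul_inv_cancel_left₀ hn _⟩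
  rw [coord_ofProjCoeff_base_coe he hPφ]
  exact mul_inv_cancel_left₀ hn _

end Trace

end Splitting

theorem stmt7_general {K E : Type*} [Field K] [NeZero (2 : K)] [NeZero (3 : K)]
    [AddCommGroup E] [Module K E] [FiniteDimensional K E]
    (H : Submodule K E) (e : E) (he : e ∉ H) (P : E →ₗ[K] H) (φ : E →ₗ[K] K)
    (hPφ : ∀ v : E, v = (P v : E) + φ v • e) (hn : (finrank K H + 2 : K) ≠ 0) :
    (∀ B : E →ₗ[K] E →ₗ[K] E, (∀ u v : E, B u v = B v u) →
      ∃! q : CubicCoeffs K H,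
        (∀ x y : H, q.1 x y = q.1 y x) ∧ (∀ x y : H, q.2.1 x y = q.2.1 y x) ∧
          IsProjCoeff H e P φ B q) ∧
    (∀ q : CubicCoeffs K H,
      (∀ x y : H, q.1 x y = q.1 y x) → (∀ x y : H, q.2.1 x y = q.2.1 y x) →
      ∃! B : E →ₗ[K] E →ₗ[K] E,
        ((∀ u v : E, B u v = B v u) ∧ (∀ u : E, LinearMap.trace K E (B u) = 0)) ∧
          IsProjCoeff H e P φ B q) ∧
    (∀ B B' : E →ₗ[K] E →ₗ[K] E, ∀ q q' : CubicCoeffs K H,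
      IsProjCoeff H e P φ B q → IsProjCoeff H e P φ B' q' →
        IsProjCoeff H e P φ (B + B') (q + q')) ∧
    (∀ (c : K) (B : E →ₗ[K] E →ₗ[K] E), ∀ q : CubicCoeffs K H,
      IsProjCoeff H e P φ B q → IsProjCoeff H e P φ (c • B) (c • q)) := by
  refine ⟨fun B hB => ?_, fun q ha hb => ?_, fun _ _ _ _ => .add, fun c _ _ => .smul c⟩
  · obtain ⟨ha, hb⟩ := isSymm_projCoeff (H := H) (e := e) (P := P) (φ := φ) hB
    exact ⟨projCoeff H e P φ B, ⟨ha, hb, isProjCoeff_projCoeff hB⟩,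
      fun q ⟨ha', hb', h⟩ => h.eq_projCoeff hB ⟨ha', hb'⟩⟩
  · obtain ⟨B, ⟨hB, ht⟩, h⟩ := exists_isProjCoeff_of_isSymm hn he hPφ ⟨ha, hb⟩
    exact ⟨B, ⟨⟨hB, ht⟩, h⟩, fun B' ⟨⟨hB', ht'⟩, h'⟩ =>
      eq_of_isProjCoeff_of_trace_eq_zero hn hPφ hB' hB ht' ht ⟨ha, hb⟩ h' h⟩

theorem stmt7 {E : Type*} [AddCommGroup E] [Module ℝ E] [FiniteDimensional ℝ E]
    (H : Submodule ℝ E) (e : E) (he : e ∉ H)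
    (hcompl : IsCompl (Submodule.span ℝ {e}) H)
    (P : E →ₗ[ℝ] H) (φ : E →ₗ[ℝ] ℝ)
    (hPφ : ∀ v : E, v = (P v : E) + φ v • e) :
    -- to every symmetric trace-free `B` corresponds a unique quadruple `(a,b,c,d)`
    -- with `a`, `b` symmetric satisfying the coefficient equation
    (∀ B : E →ₗ[ℝ] E →ₗ[ℝ] E, (∀ u v : E, B u v = B v u) →
      (∀ u : E, LinearMap.trace ℝ E (B u) = 0) →
      ∃! q : (H →ₗ[ℝ] H →ₗ[ℝ] ℝ) × (H →ₗ[ℝ] H →ₗ[ℝ] H) × (H →ₗ[ℝ] H) × H,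
        (∀ x y : H, q.1 x y = q.1 y x) ∧ (∀ x y : H, q.2.1 x y = q.2.1 y x) ∧
          ProjCoeffRel H e P φ B q) ∧
    -- conversely, every such quadruple arises from a unique symmetric trace-free `B`
    (∀ q : (H →ₗ[ℝ] H →ₗ[ℝ] ℝ) × (H →ₗ[ℝ] H →ₗ[ℝ] H) × (H →ₗ[ℝ] H) × H,
      (∀ x y : H, q.1 x y = q.1 y x) → (∀ x y : H, q.2.1 x y = q.2.1 y x) →
      ∃! B : E →ₗ[ℝ] E →ₗ[ℝ] E,
        ((∀ u v : E, B u v = B v u) ∧ (∀ u : E, LinearMap.trace ℝ E (B u) = 0)) ∧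
          ProjCoeffRel H e P φ B q) ∧
    -- the correspondence `B ↦ (a,b,c,d)` is additive …
    (∀ B B' : E →ₗ[ℝ] E →ₗ[ℝ] E,
      ∀ q q' : (H →ₗ[ℝ] H →ₗ[ℝ] ℝ) × (H →ₗ[ℝ] H →ₗ[ℝ] H) × (H →ₗ[ℝ] H) × H,
      ProjCoeffRel H e P φ B q → ProjCoeffRel H e P φ B' q' →
        ProjCoeffRel H e P φ (B + B') (q + q')) ∧
    -- … and homogeneous, hence a linear isomorphism
    (∀ (c : ℝ) (B : E →ₗ[ℝ] E →ₗ[ℝ] E),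
      ∀ q : (H →ₗ[ℝ] H →ₗ[ℝ] ℝ) × (H →ₗ[ℝ] H →ₗ[ℝ] H) × (H →ₗ[ℝ] H) × H,
      ProjCoeffRel H e P φ B q → ProjCoeffRel H e P φ (c • B) (c • q)) :=
  have ⟨existsUnique_coeff, rest⟩ := stmt7_general H e he P φ hPφ (by positivity)
  ⟨fun B hB _ => existsUnique_coeff B hB, rest⟩
end
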